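/- arXiv:1910.03267 — 2 statements merged into one kernel-verified Lean document; each statement's English description precedes it below -/
import Mathlib

section
/- Let g ∈ C^∞(ℂ, ℂ), s > 1/2, and R > 0. There exists a constant α(g,R) > 0, nondecreasing in R, such that for all v, w in the ball B_R^s = {u ∈ H^s : ‖u‖_s ≤ R} one has ‖g(v) - g(w)‖_s ≤ α(g,R) ‖v - w‖_s. -/
open scoped Real

/-- H^s norm squared summand on the periodic interval of length `T`. -/
noncomputable def sobolevSummand (T : ℝ) [hT : Fact (0 < T)] (s : ℝ)
    (f : AddCircle T → ℂ) (l : ℤ) : ℝ :=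
  (1 + (2*π*l/T)^2) ^ s * ‖fourierCoeff f l‖^2

open scoped Real ENNReal NNReal
open MeasureTheory

set_option linter.unusedSectionVars false

namespace Nemytskii

/-- extended `ℓ²` norm of a nonnegative sequence -/
noncomputable def n2 (A : ℤ → ℝ≥0∞) : ℝ≥0∞ := (∑' l, A l ^ (2:ℝ)) ^ (1/2:ℝ)

lemma n2_mono {A B : ℤ → ℝ≥0∞} (h : ∀ l, A l ≤ B l) : n2 A ≤ n2 B := by
  unfold n2
  gcongr with l
  exact h l

lemma n2_add (A B : ℤ → ℝ≥0∞) : n2 (fun l => A l + B l) ≤ n2 A + n2 B := by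
  have := ENNReal.lintegral_Lp_add_le (μ := (Measure.count : Measure ℤ)) (p := 2) (f := A) (g := B)
    (measurable_of_countable _).aemeasurable (measurable_of_countable _).aemeasurable (by norm_num)
  simpa [lintegral_count, n2] using this

lemma n2_const_mul (c : ℝ≥0∞) (A : ℤ → ℝ≥0∞) : n2 (fun l => c * A l) = c * n2 A := by
  unfold n2
  simp_rw [ENNReal.mul_rpow_of_nonneg _ _ (by norm_num : (0:ℝ) ≤ 2)]
  rw [ENNReal.tsum_mul_left, ENNReal.mul_rpow_of_nonneg _ _ (by norm_num), ← ENNReal.rpow_mul]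
  norm_num

lemma tsum_mul_le (A B : ℤ → ℝ≥0∞) : ∑' l, A l * B l ≤ n2 A * n2 B := by
  have := ENNReal.lintegral_mul_le_Lp_mul_Lq (μ := (Measure.count : Measure ℤ)) (p := 2) (q := 2)
    (by constructor <;> norm_num) (f := A) (g := B)
    (measurable_of_countable _).aemeasurable (measurable_of_countable _).aemeasurable
  simpa [lintegral_count, n2] using this

lemma n2_sq (A : ℤ → ℝ≥0∞) : n2 A ^ (2:ℝ) = ∑' l, A l ^ (2:ℝ) := by
  rw [n2, ← ENNReal.rpow_mul]; norm_num

lemma n2_le_iff (A : ℤ → ℝ≥0∞) (B : ℝ≥0∞) : n2 A ≤ B ↔ ∑' l, A l ^ (2:ℝ) ≤ B ^ (2:ℝ) := by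
  rw [← n2_sq, ENNReal.rpow_le_rpow_iff (by norm_num)]

lemma n2_le_of_finset (A : ℤ → ℝ≥0∞) (B : ℝ≥0∞)
    (h : ∀ F : Finset ℤ, ∑ l ∈ F, A l ^ (2:ℝ) ≤ B ^ (2:ℝ)) : n2 A ≤ B := by
  rw [n2_le_iff, ENNReal.tsum_eq_iSup_sum]
  exact iSup_le h

lemma young (A B : ℤ → ℝ≥0∞) :
    n2 (fun l => ∑' k, A (l - k) * B k) ≤ (∑' l, A l) * n2 B := by
  rw [n2_le_iff, ENNReal.mul_rpow_of_nonneg _ _ (by norm_num), n2_sq]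
  have hs : ∀ l : ℤ, ∑' k, A (l - k) = ∑' k, A k := fun l =>
    (Equiv.subLeft l).tsum_eq A
  have hs' : ∀ k : ℤ, ∑' l, A (l - k) = ∑' k, A k := fun k =>
    (Equiv.subRight k).tsum_eq A
  have h1 : ∀ l, (∑' k, A (l - k) * B k) ^ (2:ℝ) ≤
      (∑' k, A k) * ∑' k, A (l - k) * B k ^ (2:ℝ) := by
    intro l
    have h := tsum_mul_le (fun k => A (l - k) ^ (1/2:ℝ)) (fun k => A (l - k) ^ (1/2:ℝ) * B k)
    have h2 : ∀ k, A (l - k) ^ (1/2:ℝ) * (A (l - k) ^ (1/2:ℝ) * B k) = A (l-k) * B k := by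
      intro k
      rw [← mul_assoc, ← ENNReal.rpow_add_of_nonneg _ _ (by norm_num) (by norm_num)]
      norm_num
    simp_rw [h2] at h
    calc _ ≤ _ := ENNReal.rpow_le_rpow h (by norm_num : (0:ℝ) ≤ 2)
      _ = _ := by
        rw [ENNReal.mul_rpow_of_nonneg _ _ (by norm_num), n2_sq, n2_sq, ← hs l]
        simp_rw [ENNReal.mul_rpow_of_nonneg _ _ (by norm_num : (0:ℝ) ≤ 2), ← ENNReal.rpow_mul]
        norm_num
  calc _ ≤ ∑' l, (∑' k, A k) * ∑' k, A (l - k) * B k ^ (2:ℝ) := ENNReal.tsum_le_tsum h1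
    _ = (∑' k, A k) * ∑' k, ∑' l, A (l - k) * B k ^ (2:ℝ) := by
      rw [ENNReal.tsum_mul_left, ENNReal.tsum_comm]
    _ = _ := by
      simp_rw [ENNReal.tsum_mul_right, hs']
      rw [ENNReal.tsum_mul_left, ← mul_assoc]
      congr 1
      rw [show (2:ℝ) = 1 + 1 by norm_num, ENNReal.rpow_add_of_nonneg _ _ (by norm_num) (by norm_num)]
      simp

lemma young' (A B : ℤ → ℝ≥0∞) :
    n2 (fun l => ∑' k, A (l - k) * B k) ≤ n2 A * ∑' l, B l := by
  have : (fun l => ∑' k, A (l - k) * B k) = fun l => ∑' k, B (l - k) * A k := by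
    funext l
    rw [← (Equiv.subLeft l).tsum_eq]
    simp [mul_comm]
  rw [this, mul_comm]
  exact young B A

/-- lower semicontinuity -/
lemma n2_le_of_tendsto {ι : Type*} {L : Filter ι} [L.NeBot] (A : ι → ℤ → ℝ≥0∞) (A₀ : ℤ → ℝ≥0∞)
    (B : ℝ≥0∞) (h : ∀ l, Filter.Tendsto (fun i => A i l) L (nhds (A₀ l)))
    (hB : ∀ i, n2 (A i) ≤ B) : n2 A₀ ≤ B := by
  apply n2_le_of_finset
  intro F
  have : Filter.Tendsto (fun i => ∑ l ∈ F, A i l ^ (2:ℝ)) L (nhds (∑ l ∈ F, A₀ l ^ (2:ℝ))) := by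
    apply tendsto_finsetSum
    intro l _
    exact (ENNReal.continuous_rpow_const.tendsto _).comp (h l)
  refine le_of_tendsto this (Filter.Eventually.of_forall fun i => ?_)
  refine (ENNReal.sum_le_tsum F).trans ?_
  rw [← n2_le_iff]; exact hB i

/-! weights -/

/-- Japanese bracket -/
noncomputable def W (T : ℝ) (l : ℤ) : ℝ := Real.sqrt (1 + (2*π*l/T)^2)

lemma one_le_W (T : ℝ) (l : ℤ) : 1 ≤ W T l := by
  unfold W
  rw [Real.one_le_sqrt]
  nlinarith [sq_nonneg (2*π*l/T)]

lemma W_pos (T : ℝ) (l : ℤ) : 0 < W T l := lt_of_lt_of_le one_pos (one_le_W T l)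

lemma W_add_le (T : ℝ) (k l : ℤ) : W T (k + l) ≤ W T k + W T l := by
  have e : 2*π*((k + l : ℤ):ℝ)/T = 2*π*k/T + 2*π*l/T := by push_cast; ring
  unfold W
  rw [e]
  set a := 2*π*(k:ℝ)/T
  set b := 2*π*(l:ℝ)/T
  have ha : |a| ≤ √(1 + a^2) := Real.abs_le_sqrt (by nlinarith)
  have hb : |b| ≤ √(1 + b^2) := Real.abs_le_sqrt (by nlinarith)
  apply Real.sqrt_le_iff.2
  refine ⟨by positivity, ?_⟩
  have h1 := Real.sq_sqrt (show 0 ≤ 1 + a^2 by positivity)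
  have h2 := Real.sq_sqrt (show 0 ≤ 1 + b^2 by positivity)
  have : |a| * |b| ≤ √(1 + a^2) * √(1 + b^2) := by gcongr
  have h3 : a * b ≤ |a| * |b| := by rw [← abs_mul]; exact le_abs_self _
  nlinarith

lemma W_neg (T : ℝ) (l : ℤ) : W T (-l) = W T l := by
  unfold W; congr 2; push_cast; ring

lemma W_zero (T : ℝ) : W T 0 = 1 := by simp [W]

lemma W_sub_le (T : ℝ) (k l : ℤ) : |W T l - W T k| ≤ W T (l - k) := by
  have h1 := W_add_le T (l - k) k
  have h2 := W_add_le T (-(l - k)) l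
  rw [W_neg] at h2
  simp at h1 h2
  rw [abs_le]; constructor <;> linarith

/-- The elementary commutator inequality. -/
lemma comm_ineq (s : ℝ) (hs : 0 < s) : ∃ C : ℝ, 0 < C ∧ ∀ θ x y z : ℝ, 0 < θ → θ ≤ 1 → 1 ≤ x → 1 ≤ y → 1 ≤ z →
    |x - y| ≤ z → |x^s - y^s| ≤ C * (z^s + z^θ * y^(s-θ)) := by
  obtain ⟨m, hm⟩ := exists_nat_ge (max s 1)
  have hms : s ≤ m := le_trans (le_max_left _ _) hm
  have hm1 : (1:ℝ) ≤ m := le_trans (le_max_right _ _) hm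
  refine ⟨2^s + m * 2^m, by positivity, ?_⟩
  intro θ x y z hθ hθ1 hx hy hz hxy
  have hzs : 0 ≤ z^s := by positivity
  have hzy : 0 ≤ z^θ * y^(s-θ) := by positivity
  rw [abs_le] at hxy
  by_cases h : y ≤ z
  · have h1 : x^s ≤ (2*z)^s := Real.rpow_le_rpow (by linarith) (by linarith) hs.le
    have h2 : y^s ≤ (2*z)^s := Real.rpow_le_rpow (by linarith) (by linarith) hs.le
    rw [Real.mul_rpow (by norm_num) (by linarith)] at h1 h2
    have h3 : 0 ≤ x^s := by positivity
    have h4 : 0 ≤ y^s := by positivity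
    have : |x^s - y^s| ≤ 2^s * z^s := by rw [abs_le]; constructor <;> linarith
    refine this.trans ?_
    gcongr
    · have : (0:ℝ) ≤ m * 2^m := by positivity
      linarith
    · linarith
  · push Not at h
    have hy0 : 0 < y := by linarith
    set b := x / y with hb
    have hb0 : 0 < b := by positivity
    have hb2 : b ≤ 2 := by rw [hb, div_le_iff₀ hy0]; linarith
    have hbz : |b - 1| ≤ z / y := by
      have : b - 1 = (x - y) / y := by rw [hb]; field_simp
      rw [this, abs_div, abs_of_pos hy0]
      gcongr
      rw [abs_le]; exact hxy
    have hxb : x = b * y := by rw [hb]; field_simp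
    have h1 : |b^s - 1| ≤ |b^m - 1| := by
      rw [← Real.rpow_natCast]
      rcases le_total 1 b with h1 | h1
      · have a1 : 1 ≤ b^s := Real.one_le_rpow h1 hs.le
        have a2 : b^s ≤ b^(m:ℝ) := Real.rpow_le_rpow_of_exponent_le h1 hms
        rw [abs_of_nonneg (by linarith), abs_of_nonneg (by linarith)]; linarith
      · have a1 : b^s ≤ 1 := Real.rpow_le_one hb0.le h1 hs.le
        have a2 : b^(m:ℝ) ≤ b^s := Real.rpow_le_rpow_of_exponent_ge hb0 h1 hms
        rw [abs_of_nonpos (by linarith), abs_of_nonpos (by linarith)]; linarith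
    have h2 : |b^m - 1| ≤ (m * 2^m) * |b - 1| := by
      rw [← mul_geom_sum, abs_mul, mul_comm]
      gcongr
      refine (Finset.abs_sum_le_sum_abs _ _).trans ?_
      calc _ ≤ ∑ i ∈ Finset.range m, (2:ℝ)^m := by
            apply Finset.sum_le_sum
            intro i hi
            rw [abs_of_nonneg (by positivity)]
            calc b^i ≤ 2^i := by gcongr
              _ ≤ 2^m := by
                apply pow_le_pow_right₀ (by norm_num) (Finset.mem_range.1 hi).le
        _ = _ := by simp
    have h3 : z / y ≤ (z/y)^θ := by
      have : z / y ≤ 1 := by rw [div_le_one hy0]; exact h.le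
      conv_lhs => rw [← Real.rpow_one (z/y)]
      exact Real.rpow_le_rpow_of_exponent_ge (by positivity) this hθ1
    have h4 : (z/y)^θ * y^s = z^θ * y^(s-θ) := by
      rw [Real.div_rpow (by linarith) hy0.le, Real.rpow_sub hy0]; field_simp
    have h5 : x^s - y^s = (b^s - 1) * y^s := by
      rw [hxb, Real.mul_rpow hb0.le hy0.le]; ring
    rw [h5, abs_mul, abs_of_nonneg (by positivity : 0 ≤ y^s)]
    calc _ ≤ ((m * 2^m) * (z/y)^θ) * y^s := by
          gcongr
          exact h1.trans (h2.trans (by gcongr; exact hbz.trans h3))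
      _ = (m * 2^m) * (z^θ * y^(s-θ)) := by rw [mul_assoc, h4]
      _ ≤ _ := by
        gcongr
        · have : (0:ℝ) < 2^s := by positivity
          linarith
        · linarith

/-- weight as an extended nonnegative real -/
noncomputable def w (T r : ℝ) (l : ℤ) : ℝ≥0∞ := ENNReal.ofReal (W T l ^ r)

lemma w_mul (T r q : ℝ) (l : ℤ) : w T r l * w T q l = w T (r + q) l := by
  have := W_pos T l
  rw [w, w, w, ← ENNReal.ofReal_mul (by positivity), Real.rpow_add this]

lemma w_summable (T : ℝ) (hT : 0 < T) (r : ℝ) (hr : 1/2 < r) : n2 (w T (-r)) < ⊤ := by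
  unfold n2
  apply ENNReal.rpow_lt_top_of_nonneg (by norm_num)
  have e : ∀ l, w T (-r) l ^ (2:ℝ) = ENNReal.ofReal (W T l ^ (-(2 * r))) := by
    intro l
    have := W_pos T l
    rw [w, ENNReal.ofReal_rpow_of_nonneg (by positivity) (by norm_num), ← Real.rpow_mul this.le]
    congr 2; ring
  simp_rw [e]
  have hpos : ∀ l, 0 ≤ W T l ^ (-(2 * r)) := fun l => by have := W_pos T l; positivity
  have hsum : Summable (fun l : ℤ => W T l ^ (-(2 * r))) := by
    have h0 : Summable (fun l : ℤ => (2*π/T)^(-(2*r)) * |(l:ℝ)| ^ (-(2 * r))) :=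
      (Real.summable_abs_int_rpow (by linarith)).mul_left _
    refine Summable.of_norm_bounded_eventually h0 ?_
    have : ∀ᶠ l : ℤ in Filter.cofinite, l ≠ 0 := by
      simpa using (Set.finite_singleton (0:ℤ)).compl_mem_cofinite
    filter_upwards [this] with l hl
    rw [Real.norm_of_nonneg (hpos l), ← Real.mul_rpow (by positivity) (by positivity)]
    have hl' : 0 < |(l:ℝ)| := by positivity
    apply Real.rpow_le_rpow_of_nonpos (by positivity) _ (by linarith)
    unfold W
    have : 2 * π / T * |(l:ℝ)| = |2*π*l/T| := by
      rw [abs_div, abs_mul, abs_of_pos hT, abs_of_pos (by positivity : 0 < 2 * π)]; ring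
    rw [this]
    exact Real.abs_le_sqrt (by linarith)
  rw [← ENNReal.ofReal_tsum_of_nonneg hpos hsum]
  exact ENNReal.ofReal_ne_top

/-- Cauchy-Schwarz: weighted `ℓ¹` by weighted `ℓ²` -/
lemma l1_le (T r q : ℝ) (A : ℤ → ℝ≥0∞) :
    ∑' l, w T q l * A l ≤ n2 (w T (-r)) * n2 (fun l => w T (q + r) l * A l) := by
  refine le_trans (le_of_eq ?_) (tsum_mul_le _ _)
  congr 1; funext l
  rw [← mul_assoc, w_mul]; congr 2; ring

lemma w_zero_exp (T : ℝ) (l : ℤ) : w T 0 l = 1 := by simp [w]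

lemma w_mono (T : ℝ) {r q : ℝ} (h : r ≤ q) (l : ℤ) : w T r l ≤ w T q l := by
  unfold w
  gcongr
  exact one_le_W T l

end Nemytskii

namespace Nemytskii

section circle
variable {T : ℝ} [hT : Fact (0 < T)]

lemma integrable_cont (f : C(AddCircle T, ℂ)) :
    Integrable f (AddCircle.haarAddCircle : Measure (AddCircle T)) :=
  f.continuous.integrable_of_hasCompactSupport (HasCompactSupport.of_compactSpace _)

/-- the Fourier coefficient as a continuous linear functional -/
noncomputable def fcL (l : ℤ) : C(AddCircle T, ℂ) →L[ℂ] ℂ :=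
  LinearMap.mkContinuous
    { toFun := fun f => fourierCoeff f l
      map_add' := fun f g => by
        have := fourierCoeff.add (integrable_cont f) (integrable_cont g)
        simpa using congrFun this l
      map_smul' := fun c f => by
        simpa using fourierCoeff.const_smul (⇑f) c l } 1
    (fun f => by
      simp only [LinearMap.coe_mk, AddHom.coe_mk, one_mul]
      unfold fourierCoeff
      have := norm_integral_le_of_norm_le_const (μ := (AddCircle.haarAddCircle : Measure (AddCircle T)))
        (f := fun t => fourier (-l) t • f t) (C := ‖f‖) (by
          refine Filter.Eventually.of_forall fun t => ?_
          rw [norm_smul, fourier_apply, Circle.norm_coe, one_mul]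
          exact f.norm_coe_le_norm t)
      simpa using this)

lemma fcL_apply (l : ℤ) (f : C(AddCircle T, ℂ)) : fcL l f = fourierCoeff f l := rfl

/-- extended Sobolev norm -/
noncomputable def N (s : ℝ) (f : C(AddCircle T, ℂ)) : ℝ≥0∞ := n2 (fun l => w T s l * ‖fcL l f‖ₑ)

lemma N_add (s : ℝ) (f g : C(AddCircle T, ℂ)) : N s (f + g) ≤ N s f + N s g := by
  refine le_trans (n2_mono fun l => ?_) (n2_add _ _)
  rw [map_add, ← mul_add]
  gcongr
  exact enorm_add_le _ _

lemma N_smul (s : ℝ) (c : ℂ) (f : C(AddCircle T, ℂ)) : N s (c • f) = ‖c‖ₑ * N s f := by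
  unfold N
  rw [← n2_const_mul]
  congr 1; funext l
  rw [map_smul, smul_eq_mul, enorm_mul]; ring

lemma N_sub (s : ℝ) (f g : C(AddCircle T, ℂ)) : N s (f - g) ≤ N s f + N s g := by
  have h := N_add s f ((-1 : ℂ) • g)
  rw [N_smul] at h
  simpa [sub_eq_add_neg] using h

lemma N_zero (s : ℝ) : N s (0 : C(AddCircle T, ℂ)) = 0 := by
  have := N_smul s 0 (0 : C(AddCircle T, ℂ))
  simpa using this

lemma N_sum (s : ℝ) {ι : Type*} (F : Finset ι) (f : ι → C(AddCircle T, ℂ)) :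
    N s (∑ i ∈ F, f i) ≤ ∑ i ∈ F, N s (f i) := by
  classical
  induction F using Finset.induction_on with
  | empty => simp [N_zero]
  | insert a F ha ih =>
    rw [Finset.sum_insert ha, Finset.sum_insert ha]
    exact (N_add _ _ _).trans (by gcongr)

lemma N_mono {r s : ℝ} (h : r ≤ s) (f : C(AddCircle T, ℂ)) : N r f ≤ N s f :=
  n2_mono fun l => by gcongr; exact w_mono T h l

lemma N_lsc (s : ℝ) {ι : Type*} {L : Filter ι} [L.NeBot] {f : ι → C(AddCircle T, ℂ)}
    {f₀ : C(AddCircle T, ℂ)} (h : Filter.Tendsto f L (nhds f₀)) {B : ℝ≥0∞}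
    (hB : ∀ i, N s (f i) ≤ B) : N s f₀ ≤ B := by
  refine n2_le_of_tendsto (L := L) (fun i l => w T s l * ‖fcL l (f i)‖ₑ) _ B (fun l => ?_) hB
  refine ENNReal.Tendsto.const_mul ?_ (Or.inr ENNReal.ofReal_ne_top)
  exact (continuous_enorm.tendsto _).comp (((fcL l).continuous.tendsto _).comp h)

lemma fcL_fourier (k l : ℤ) : fcL l (fourier k : C(AddCircle T, ℂ)) = if l = k then 1 else 0 := by
  rw [fcL_apply, fourierCoeff_fourier, Pi.single_apply]

lemma fcL_mul_fourier (f : C(AddCircle T, ℂ)) (k l : ℤ) :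
    fcL l (f * fourier k) = fcL (l - k) f := by
  rw [fcL_apply, fcL_apply]
  unfold fourierCoeff
  congr 1; funext t
  rw [show -(l - k) = -l + k by ring, fourier_add]
  simp only [ContinuousMap.mul_apply, smul_eq_mul]; ring

lemma N_one (s : ℝ) : N s (1 : C(AddCircle T, ℂ)) = 1 := by
  have h : (1 : C(AddCircle T, ℂ)) = fourier 0 := by ext x; simp
  unfold N n2
  rw [h]
  simp_rw [fcL_fourier]
  rw [tsum_eq_single 0]
  · simp [w, W_zero]
  · intro b hb; simp [hb]

lemma fcL_star (f : C(AddCircle T, ℂ)) (l : ℤ) : fcL l (star f) = star (fcL (-l) f) := by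
  rw [fcL_apply, fcL_apply]
  unfold fourierCoeff
  rw [show star (∫ t : AddCircle T, (fourier (- -l)) t • f t ∂AddCircle.haarAddCircle)
    = (starRingEnd ℂ) (∫ t : AddCircle T, (fourier (- -l)) t • f t ∂AddCircle.haarAddCircle) from rfl,
    ← integral_conj]
  congr 1; funext t
  rw [smul_eq_mul, smul_eq_mul, map_mul, ← fourier_neg, neg_neg]
  rfl

lemma N_star (s : ℝ) (f : C(AddCircle T, ℂ)) : N s (star f) = N s f := by
  unfold N n2
  congr 1
  rw [← (Equiv.neg ℤ).tsum_eq]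
  congr 1; funext l
  simp only [Equiv.neg_apply, fcL_star, neg_neg]
  congr 2
  · simp [w, W_neg]
  · rw [← ofReal_norm, ← ofReal_norm, norm_star]

/-- trigonometric polynomial -/
noncomputable def trig (F : Finset ℤ) (c : ℤ → ℂ) : C(AddCircle T, ℂ) := ∑ k ∈ F, c k • fourier k

lemma fcL_trig (F : Finset ℤ) (c : ℤ → ℂ) (l : ℤ) :
    fcL l (trig F c : C(AddCircle T, ℂ)) = if l ∈ F then c l else 0 := by
  simp [trig, map_sum, fcL_fourier]

lemma fcL_mul_trig (f : C(AddCircle T, ℂ)) (F : Finset ℤ) (c : ℤ → ℂ) (l : ℤ) :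
    fcL l (f * trig F c) = ∑ k ∈ F, c k * fcL (l - k) f := by
  simp [trig, Finset.mul_sum, map_sum, fcL_mul_fourier]

lemma l1_fc (r q : ℝ) (u : C(AddCircle T, ℂ)) :
    ∑' l, w T q l * ‖fcL l u‖ₑ ≤ n2 (w T (-r)) * N (q + r) u := l1_le T r q _

lemma l1_fc' (r : ℝ) (u : C(AddCircle T, ℂ)) :
    ∑' l, ‖fcL l u‖ₑ ≤ n2 (w T (-r)) * N r u := by
  simpa [w_zero_exp] using l1_fc r 0 u

lemma hasSum_fc {s : ℝ} (hs : 1/2 < s) (u : C(AddCircle T, ℂ)) (hu : N s u < ⊤) :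
    HasSum (fun i => fcL i u • fourier i) u := by
  apply hasSum_fourier_series_of_summable
  have h := l1_fc' s u
  have h2 : ∑' l, ‖fcL l u‖ₑ ≠ ⊤ :=
    (h.trans_lt (ENNReal.mul_lt_top (w_summable T hT.out s hs) hu)).ne
  apply Summable.of_enorm
  exact h2

lemma tendsto_trig {s : ℝ} (hs : 1/2 < s) (u : C(AddCircle T, ℂ)) (hu : N s u < ⊤) :
    Filter.Tendsto (fun F => trig F (fun k => fcL k u)) Filter.atTop (nhds u) :=
  hasSum_fc hs u hu

lemma norm_le_N {s : ℝ} (hs : 1/2 < s) (u : C(AddCircle T, ℂ)) (hu : N s u < ⊤) (x : AddCircle T) :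
    ‖u x‖ₑ ≤ n2 (w T (-s)) * N s u := by
  refine le_trans ?_ (l1_fc' s u)
  have h := (ContinuousMap.evalCLM ℂ x).hasSum (hasSum_fc hs u hu)
  refine le_of_tendsto ((continuous_enorm.tendsto _).comp h) (Filter.Eventually.of_forall fun F => ?_)
  refine (enorm_sum_le _ _).trans ?_
  refine le_trans (Finset.sum_le_sum fun i _ => ?_) (ENNReal.sum_le_tsum F)
  have : ‖(fourier i x : ℂ)‖ₑ = 1 := by rw [← ofReal_norm, fourier_apply, Circle.norm_coe]; simp
  change ‖fcL i u • fourier i x‖ₑ ≤ _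
  rw [enorm_smul, this, mul_one]

lemma conv_le {s : ℝ} (hs : 1/2 < s) (f u : C(AddCircle T, ℂ)) (hu : N s u < ⊤) (l : ℤ) :
    ‖fcL l (f * u)‖ₑ ≤ ∑' k, ‖fcL (l - k) f‖ₑ * ‖fcL k u‖ₑ := by
  have h : Filter.Tendsto (fun F => f * trig F (fun k => fcL k u)) Filter.atTop (nhds (f * u)) :=
    (tendsto_trig hs u hu).const_mul f
  refine le_of_tendsto ((continuous_enorm.tendsto _).comp (((fcL l).continuous.tendsto _).comp h))
    (Filter.Eventually.of_forall fun F => ?_)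
  simp only [Function.comp, fcL_mul_trig]
  refine (enorm_sum_le _ _).trans ?_
  refine le_trans (Finset.sum_le_sum fun i _ => ?_) (ENNReal.sum_le_tsum F)
  rw [enorm_mul, mul_comm]

lemma N_mul {s : ℝ} (hs : 1/2 < s) : ∃ C : ℝ≥0∞, 1 ≤ C ∧ C < ⊤ ∧ ∀ f u : C(AddCircle T, ℂ), N s u < ⊤ →
    N s (f * u) ≤ C * N s f * N s u := by
  set K := n2 (w T (-s)) with hK
  have hKt : K < ⊤ := w_summable T hT.out s hs
  refine ⟨1 + ENNReal.ofReal (2^s) * (K + K), le_self_add, ?_, ?_⟩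
  · exact ENNReal.add_lt_top.2 ⟨ENNReal.one_lt_top, ENNReal.mul_lt_top ENNReal.ofReal_lt_top
      (ENNReal.add_lt_top.2 ⟨hKt, hKt⟩)⟩
  intro f u hu
  have hw : ∀ l k : ℤ, w T s l ≤ ENNReal.ofReal (2^s) * (w T s (l - k) + w T s k) := by
    intro l k
    have h1 := W_add_le T (l - k) k
    rw [sub_add_cancel] at h1
    have p0 := W_pos T l
    have p1 := W_pos T (l-k)
    have p2 := W_pos T k
    unfold w
    rw [← ENNReal.ofReal_add (by positivity) (by positivity), ← ENNReal.ofReal_mul (by positivity)]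
    apply ENNReal.ofReal_le_ofReal
    have e1 : 0 ≤ W T (l-k) ^ s := by positivity
    have e2 : 0 ≤ W T k ^ s := by positivity
    have e3 : (0:ℝ) < 2 ^ s := by positivity
    rcases le_total (W T (l-k)) (W T k) with h | h
    · have : W T l ^ s ≤ (2 * W T k)^s := Real.rpow_le_rpow p0.le (by linarith) (by linarith)
      rw [Real.mul_rpow (by norm_num) p2.le] at this
      nlinarith
    · have : W T l ^ s ≤ (2 * W T (l-k))^s := Real.rpow_le_rpow p0.le (by linarith) (by linarith)
      rw [Real.mul_rpow (by norm_num) p1.le] at this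
      nlinarith
  have h1 : N s (f * u) ≤ n2 (fun l => ENNReal.ofReal (2^s) *
      ((∑' k, (fun l => w T s l * ‖fcL l f‖ₑ) (l - k) * ‖fcL k u‖ₑ) +
       (∑' k, ‖fcL (l - k) f‖ₑ * (fun l => w T s l * ‖fcL l u‖ₑ) k))) := by
    refine n2_mono fun l => ?_
    rw [← ENNReal.tsum_add, ← ENNReal.tsum_mul_left]
    refine (mul_le_mul_right (conv_le hs f u hu l) _).trans ?_
    rw [← ENNReal.tsum_mul_left]
    refine ENNReal.tsum_le_tsum fun k => ?_
    calc _ ≤ (ENNReal.ofReal (2^s) * (w T s (l - k) + w T s k)) * (‖fcL (l - k) f‖ₑ * ‖fcL k u‖ₑ) := by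
          gcongr; exact hw l k
      _ = _ := by ring
  refine h1.trans ?_
  rw [n2_const_mul]
  have h2 := n2_add (fun l => ∑' k, (fun l => w T s l * ‖fcL l f‖ₑ) (l - k) * ‖fcL k u‖ₑ)
    (fun l => ∑' k, ‖fcL (l - k) f‖ₑ * (fun l => w T s l * ‖fcL l u‖ₑ) k)
  have h3 := young' (fun l => w T s l * ‖fcL l f‖ₑ) (fun k => ‖fcL k u‖ₑ)
  have h4 := young (fun l => ‖fcL l f‖ₑ) (fun l => w T s l * ‖fcL l u‖ₑ)
  have h5 := l1_fc' s u
  have h6 := l1_fc' s f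
  rw [← hK] at h5 h6
  calc _ ≤ ENNReal.ofReal (2^s) * (N s f * (K * N s u) + (K * N s f) * N s u) := by
        gcongr
        refine h2.trans (add_le_add (h3.trans ?_) (h4.trans ?_))
        · exact mul_le_mul' le_rfl h5
        · exact mul_le_mul' h6 le_rfl
    _ = ENNReal.ofReal (2^s) * (K + K) * N s f * N s u := by ring
    _ ≤ _ := by gcongr; exact le_add_self

lemma parseval (f : C(AddCircle T, ℂ)) : n2 (fun l => ‖fcL l f‖ₑ) ^ (2:ℝ) =
    ENNReal.ofReal (∫ t : AddCircle T, ‖f t‖ ^ 2 ∂AddCircle.haarAddCircle) := by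
  have h := hasSum_sq_fourierCoeff (ContinuousMap.toLp (E := ℂ) 2 AddCircle.haarAddCircle ℂ f)
  simp_rw [fourierCoeff_toLp] at h
  have e : ∫ t : AddCircle T, ‖(ContinuousMap.toLp (E := ℂ) 2 AddCircle.haarAddCircle ℂ f) t‖ ^ 2
      ∂AddCircle.haarAddCircle = ∫ t : AddCircle T, ‖f t‖ ^ 2 ∂AddCircle.haarAddCircle := by
    apply integral_congr_ae
    filter_upwards [ContinuousMap.coeFn_toLp (p := 2) (𝕜 := ℂ) AddCircle.haarAddCircle f] with t ht
    rw [ht]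
  rw [e] at h
  rw [n2_sq, ← h.tsum_eq, ENNReal.ofReal_tsum_of_nonneg (fun _ => by positivity) h.summable]
  congr 1; funext l
  rw [← ofReal_norm, ENNReal.ofReal_rpow_of_nonneg (norm_nonneg _) (by norm_num), fcL_apply]
  norm_num

lemma N_unimod (E : C(AddCircle T, ℂ)) (hE : ∀ x, ‖E x‖ = 1) : N 0 E ≤ 1 := by
  unfold N
  simp_rw [w_zero_exp, one_mul]
  have h := parseval E
  simp only [hE] at h
  rw [← ENNReal.rpow_le_rpow_iff (by norm_num : (0:ℝ) < 2), h]
  simp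

lemma unimod_mul (E q : C(AddCircle T, ℂ)) (hE : ∀ x, ‖E x‖ = 1) :
    n2 (fun l => ‖fcL l (E * q)‖ₑ) = n2 (fun l => ‖fcL l q‖ₑ) := by
  have h := parseval (E * q)
  simp only [ContinuousMap.mul_apply, norm_mul, hE, one_mul] at h
  rw [← parseval] at h
  exact ENNReal.rpow_left_injective (by norm_num : (2:ℝ) ≠ 0) h

end circle
end Nemytskii

namespace Nemytskii

section circle
variable {T : ℝ} [hT : Fact (0 < T)]

/-- multiplication by a unimodular function, up to lower order terms, does not increase the norm -/
lemma N_comm {s θ : ℝ} (hθ : 0 < θ) (hθ1 : θ ≤ 1) (hs : 1/2 < s - θ) :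
    ∃ C : ℝ≥0∞, C < ⊤ ∧ ∀ E u : C(AddCircle T, ℂ), (∀ x, ‖E x‖ = 1) → N s u < ⊤ →
      N s (E * u) ≤ N s u + C * N s E * N (s - θ) u := by
  obtain ⟨c, hc, hcomm⟩ := comm_ineq s (by linarith)
  set K := n2 (w T (-(s - θ))) with hK
  have hKt : K < ⊤ := w_summable T hT.out _ hs
  refine ⟨ENNReal.ofReal c * (K + K), ENNReal.mul_lt_top ENNReal.ofReal_lt_top
      (ENNReal.add_lt_top.2 ⟨hKt, hKt⟩), ?_⟩
  intro E u hE hu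
  refine N_lsc s ((tendsto_trig (s := s) (by linarith) u hu).const_mul E) fun F => ?_
  set q : C(AddCircle T, ℂ) := trig F (fun k => ((W T k ^ s : ℝ) : ℂ) * fcL k u) with hq
  have hq1 : n2 (fun l => ‖fcL l (E * q)‖ₑ) ≤ N s u := by
    rw [unimod_mul E q hE]
    refine n2_mono fun l => ?_
    rw [hq, fcL_trig]
    split_ifs
    · rw [enorm_mul]
      gcongr
      have := W_pos T l
      rw [← ofReal_norm, Complex.norm_of_nonneg (by positivity)]; rfl
    · simp
  have key : ∀ l, w T s l * ‖fcL l (E * trig F (fun k => fcL k u))‖ₑ ≤ ‖fcL l (E * q)‖ₑ +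
      ENNReal.ofReal c * ((∑' k, (fun l => w T s l * ‖fcL l E‖ₑ) (l - k) * ‖fcL k u‖ₑ) +
       (∑' k, (fun l => w T θ l * ‖fcL l E‖ₑ) (l - k) * (fun l => w T (s-θ) l * ‖fcL l u‖ₑ) k)) := by
    intro l
    have hl := W_pos T l
    have e0 : w T s l = ‖((W T l ^ s : ℝ) : ℂ)‖ₑ := by
      rw [← ofReal_norm, Complex.norm_of_nonneg (by positivity)]; rfl
    have e1 : ((W T l ^ s : ℝ) : ℂ) * fcL l (E * trig F (fun k => fcL k u)) = fcL l (E * q) +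
        ∑ k ∈ F, ((W T l ^ s - W T k ^ s : ℝ) : ℂ) * (fcL (l - k) E * fcL k u) := by
      rw [fcL_mul_trig, hq, fcL_mul_trig, ← Finset.sum_add_distrib, Finset.mul_sum]
      refine Finset.sum_congr rfl fun k _ => ?_
      push_cast; ring
    rw [e0, ← enorm_mul, e1]
    refine (enorm_add_le _ _).trans ?_
    gcongr
    refine (enorm_sum_le _ _).trans ?_
    rw [← ENNReal.tsum_add, ← ENNReal.tsum_mul_left]
    refine le_trans (Finset.sum_le_sum fun k _ => ?_) (ENNReal.sum_le_tsum F)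
    rw [enorm_mul, enorm_mul]
    have h := hcomm θ (W T l) (W T k) (W T (l - k)) hθ hθ1 (one_le_W _ _) (one_le_W _ _) (one_le_W _ _)
      (W_sub_le T k l)
    have p1 := W_pos T (l-k)
    have p2 := W_pos T k
    have h' : ‖((W T l ^ s - W T k ^ s : ℝ) : ℂ)‖ₑ ≤ ENNReal.ofReal c *
        (w T s (l - k) + w T θ (l - k) * w T (s - θ) k) := by
      unfold w
      rw [← ENNReal.ofReal_mul (by positivity), ← ENNReal.ofReal_add (by positivity) (by positivity),
        ← ENNReal.ofReal_mul hc.le, ← ofReal_norm, Complex.norm_real]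
      exact ENNReal.ofReal_le_ofReal h
    refine (mul_le_mul_left h' _).trans (le_of_eq ?_)
    ring
  refine (n2_mono key).trans ((n2_add _ _).trans ?_)
  refine add_le_add hq1 ?_
  rw [n2_const_mul]
  have h2 := n2_add (fun l => ∑' k, (fun l => w T s l * ‖fcL l E‖ₑ) (l - k) * ‖fcL k u‖ₑ)
    (fun l => ∑' k, (fun l => w T θ l * ‖fcL l E‖ₑ) (l - k) * (fun l => w T (s-θ) l * ‖fcL l u‖ₑ) k)
  have h3 := young' (fun l => w T s l * ‖fcL l E‖ₑ) (fun k => ‖fcL k u‖ₑ)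
  have h4 := young (fun l => w T θ l * ‖fcL l E‖ₑ) (fun l => w T (s-θ) l * ‖fcL l u‖ₑ)
  have h5 := l1_fc' (s - θ) u
  have h6 := l1_fc (s - θ) θ E
  rw [add_sub_cancel] at h6
  rw [← hK] at h5 h6
  calc _ ≤ ENNReal.ofReal c * (N s E * (K * N (s-θ) u) + (K * N s E) * N (s-θ) u) := by
        gcongr
        refine h2.trans (add_le_add (h3.trans ?_) (h4.trans ?_))
        · exact mul_le_mul' le_rfl h5
        · exact mul_le_mul' h6 le_rfl
    _ = _ := by ring

/-- interpolation between `H^0` and `H^s` -/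
lemma N_interp {s : ℝ} (m : ℕ) (hm : 0 < m) (hs : 0 < s - 1 / m) (p : ℕ) (hp : m * s ≤ p)
    (n : ℕ) (hn : 0 < n) (u : C(AddCircle T, ℂ)) :
    N (s - 1/m) u ≤ (n:ℝ≥0∞)⁻¹ * N s u + (n:ℝ≥0∞)^p * N 0 u := by
  unfold N
  rw [← n2_const_mul, ← n2_const_mul]
  refine le_trans (n2_mono fun l => ?_) (n2_add _ _)
  rw [w_zero_exp, one_mul, ← mul_assoc, ← add_mul]
  gcongr
  have hm' : (0:ℝ) < m := by exact_mod_cast hm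
  have hn' : (1:ℝ) ≤ n := by exact_mod_cast hn
  have hW := W_pos T l
  have h : W T l ^ (s - 1/m) ≤ (n:ℝ)⁻¹ * W T l ^ s + (n:ℝ)^p := by
    by_cases h : (n:ℝ)^m ≤ W T l
    · have h1 : (n:ℝ) ≤ W T l ^ (1/(m:ℝ)) := by
        calc (n:ℝ) = ((n:ℝ)^m)^(1/(m:ℝ)) := by
              rw [← Real.rpow_natCast, ← Real.rpow_mul (by linarith)]
              field_simp; simp
          _ ≤ _ := Real.rpow_le_rpow (by positivity) h (by positivity)
      rw [Real.rpow_sub hW, div_eq_inv_mul]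
      have : (W T l ^ (1/(m:ℝ)))⁻¹ ≤ (n:ℝ)⁻¹ := by gcongr
      have h3 : 0 ≤ (n:ℝ)^p := by positivity
      have h4 : (W T l ^ (1/(m:ℝ)))⁻¹ * W T l ^ s ≤ (n:ℝ)⁻¹ * W T l ^ s := by gcongr
      linarith
    · push Not at h
      have h1 : W T l ^ (s - 1/m) ≤ ((n:ℝ)^m) ^ (s - 1/m) := Real.rpow_le_rpow hW.le h.le hs.le
      have h2 : ((n:ℝ)^m) ^ (s - 1/m) ≤ (n:ℝ)^p := by
        rw [← Real.rpow_natCast, ← Real.rpow_natCast, ← Real.rpow_mul (by linarith)]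
        apply Real.rpow_le_rpow_of_exponent_le hn'
        have : (m:ℝ) * (s - 1/m) = m * s - 1 := by field_simp
        linarith
      have : 0 ≤ (n:ℝ)⁻¹ * W T l ^ s := by positivity
      linarith
  unfold w
  refine (ENNReal.ofReal_le_ofReal h).trans (le_of_eq ?_)
  rw [ENNReal.ofReal_add (by positivity) (by positivity), ENNReal.ofReal_mul (by positivity),
    ENNReal.ofReal_inv_of_pos (by positivity), ENNReal.ofReal_pow (by positivity),
    ENNReal.ofReal_natCast]

/-- powers of a unimodular function grow at most polynomially in `H^s` -/
lemma N_pow_growth {s : ℝ} (hs : 1/2 < s) : ∃ p : ℕ, ∀ B : ℝ≥0∞, B < ⊤ → ∃ K : ℝ≥0∞, K < ⊤ ∧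
    ∀ E : C(AddCircle T, ℂ), (∀ x, ‖E x‖ = 1) → N s E ≤ B → ∀ n : ℕ, 0 < n → ∀ j ≤ n,
      N s (E ^ j) ≤ K * (n:ℝ≥0∞)^p := by
  obtain ⟨m, hm⟩ := exists_nat_gt (1 / (s - 1/2))
  have hs' : 0 < s - 1/2 := by linarith
  have hm0 : (0:ℝ) < m := lt_trans (by positivity) hm
  have hm0' : 0 < m := by exact_mod_cast hm0
  have hm1 : (1:ℝ) ≤ m := by exact_mod_cast hm0'
  have hθ : 1 / (m:ℝ) < s - 1/2 := by
    rw [div_lt_iff₀ hs'] at hm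
    rw [div_lt_iff₀ hm0]; linarith
  obtain ⟨p, hp⟩ := exists_nat_ge ((m:ℝ) * s)
  obtain ⟨C, hC, hcomm⟩ := N_comm (T := T) (s := s) (θ := 1/(m:ℝ)) (by positivity)
    (by rw [div_le_one hm0]; exact hm1) (by linarith)
  obtain ⟨M, hM1, hMt, hmul⟩ := N_mul (T := T) hs
  refine ⟨p + 1, fun B hB => ?_⟩
  set D := C * B with hD
  have hDt : D < ⊤ := ENNReal.mul_lt_top hC hB
  refine ⟨ENNReal.ofReal (Real.exp D.toReal) * (1 + D), ENNReal.mul_lt_top ENNReal.ofReal_lt_top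
    (ENNReal.add_lt_top.2 ⟨ENNReal.one_lt_top, hDt⟩), ?_⟩
  intro E hE hEB n hn j hj
  have hu : ∀ i : ℕ, ∀ x, ‖(E ^ i) x‖ = 1 := fun i x => by simp [hE]
  have hfin : ∀ i : ℕ, N s (E ^ i) < ⊤ := by
    intro i
    induction i with
    | zero => simp [N_one]
    | succ i ih =>
      rw [pow_succ']
      refine (hmul E (E^i) ih).trans_lt ?_
      exact ENNReal.mul_lt_top (ENNReal.mul_lt_top hMt (hEB.trans_lt hB)) ih
  have step : ∀ i, N s (E ^ (i+1)) ≤ (1 + D * (n:ℝ≥0∞)⁻¹) * N s (E ^ i) + D * (n:ℝ≥0∞)^p := by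
    intro i
    rw [pow_succ']
    have h1 := hcomm E (E^i) hE (hfin i)
    have h2 := N_interp m hm0' (by linarith) p hp n hn (E^i)
    calc _ ≤ _ := h1
      _ ≤ N s (E^i) + C * B * ((n:ℝ≥0∞)⁻¹ * N s (E^i) + (n:ℝ≥0∞)^p * 1) := by
        gcongr
        refine h2.trans ?_
        gcongr
        exact N_unimod _ (hu i)
      _ = _ := by rw [hD]; ring
  set Q := 1 + D * (n:ℝ≥0∞)⁻¹ with hQ
  have hQ1 : 1 ≤ Q := le_self_add
  have claim : ∀ i : ℕ, N s (E ^ i) ≤ Q ^ i * (1 + i * (D * (n:ℝ≥0∞)^p)) := by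
    intro i
    induction i with
    | zero => simp [N_one]
    | succ i ih =>
      calc _ ≤ _ := step i
        _ ≤ Q * (Q ^ i * (1 + i * (D * (n:ℝ≥0∞)^p))) + Q^(i+1) * (D * (n:ℝ≥0∞)^p) := by
          refine add_le_add (by gcongr) ?_
          exact le_mul_of_one_le_left (zero_le) (one_le_pow₀ hQ1)
        _ = _ := by push_cast; ring
  have hn' : (1:ℝ≥0∞) ≤ n := by exact_mod_cast hn
  have hQn : Q ^ n ≤ ENNReal.ofReal (Real.exp D.toReal) := by
    have hnpos : (0:ℝ) < n := by exact_mod_cast hn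
    have : Q ≤ ENNReal.ofReal (Real.exp (D.toReal / n)) := by
      have e : Q = ENNReal.ofReal (1 + D.toReal / n) := by
        rw [ENNReal.ofReal_add (by norm_num) (by positivity), ENNReal.ofReal_div_of_pos hnpos,
          ENNReal.ofReal_toReal hDt.ne, ENNReal.ofReal_natCast, hQ, ENNReal.ofReal_one, div_eq_mul_inv]
      rw [e]
      apply ENNReal.ofReal_le_ofReal
      have := Real.add_one_le_exp (D.toReal / n)
      linarith
    refine (pow_le_pow_left' this n).trans (le_of_eq ?_)
    rw [← ENNReal.ofReal_pow (by positivity), ← Real.exp_nat_mul]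
    congr 2; field_simp
  calc _ ≤ _ := claim j
    _ ≤ Q ^ n * (1 * (n:ℝ≥0∞)^(p+1) + n * (D * (n:ℝ≥0∞)^p)) := by
      gcongr
      · rw [one_mul]; exact one_le_pow₀ hn'
    _ = Q ^ n * (1 + D) * (n:ℝ≥0∞)^(p+1) := by ring
    _ ≤ _ := by gcongr

/-- local Lipschitz bound for the exponential -/
lemma N_exp {s : ℝ} (hs : 1/2 < s) (R : ℝ≥0∞) (hR : R < ⊤) : ∃ K : ℝ≥0∞, K < ⊤ ∧
    ∀ f h : C(AddCircle T, ℂ), N s f ≤ R → N s h ≤ R →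
      N s (NormedSpace.exp f - NormedSpace.exp h) ≤ K * N s (f - h) := by
  obtain ⟨M, hM1, hMt, hmul⟩ := N_mul (T := T) hs
  set Q := M * (1 + R) with hQ
  have hQt : Q < ⊤ := ENNReal.mul_lt_top hMt (ENNReal.add_lt_top.2 ⟨ENNReal.one_lt_top, hR⟩)
  have hQ1 : 1 ≤ Q := by
    rw [hQ, ← one_mul (1:ℝ≥0∞)]; gcongr; simp
  have hMR : M * R ≤ Q := by rw [hQ]; gcongr; exact le_add_self
  refine ⟨ENNReal.ofReal (Real.exp (2 * Q.toReal)) * M, ENNReal.mul_lt_top ENNReal.ofReal_lt_top hMt, ?_⟩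
  clear_value Q
  intro f h hf hh
  have hft : N s f < ⊤ := hf.trans_lt hR
  have hht : N s h < ⊤ := hh.trans_lt hR
  have hdt : N s (f - h) < ⊤ := (N_sub _ _ _).trans_lt (ENNReal.add_lt_top.2 ⟨hft, hht⟩)
  have hpow : ∀ k : ℕ, N s (h ^ k) ≤ Q ^ k := by
    intro k
    induction k with
    | zero => simp [N_one]
    | succ k ih =>
      rw [pow_succ, pow_succ]
      refine (hmul _ _ hht).trans ?_
      calc _ ≤ M * Q^k * R := by gcongr
        _ = Q ^ k * (M * R) := by ring
        _ ≤ _ := by gcongr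
  have hdiff : ∀ k : ℕ, N s (f^k - h^k) ≤ k * Q^k * M * N s (f - h) := by
    intro k
    induction k with
    | zero => simp [N_zero]
    | succ k ih =>
      have e : f^(k+1) - h^(k+1) = (f^k - h^k) * f + h^k * (f - h) := by ring
      rw [e]
      refine (N_add _ _ _).trans ?_
      calc _ ≤ M * N s (f^k - h^k) * N s f + M * N s (h^k) * N s (f - h) :=
            add_le_add (hmul _ _ hft) (hmul _ _ hdt)
        _ ≤ M * (k * Q^k * M * N s (f - h)) * R + M * Q^k * N s (f-h) := by
            gcongr; exact hpow k
        _ = (M * R) * (k * Q^k * M * N s (f - h)) + 1 * (Q^k * M * N s (f-h)) := by ring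
        _ ≤ Q * (k * Q^k * M * N s (f - h)) + Q * (Q^k * M * N s (f-h)) := by gcongr
        _ = _ := by push_cast; ring
  have hlim := (NormedSpace.exp_series_hasSum_exp' (𝕂 := ℂ) f).sub
    (NormedSpace.exp_series_hasSum_exp' (𝕂 := ℂ) h)
  refine N_lsc s hlim fun F => ?_
  refine (N_sum _ _ _).trans ?_
  have hterm : ∀ k : ℕ, N s ((((k.factorial : ℂ)⁻¹) • f ^ k - ((k.factorial : ℂ)⁻¹) • h ^ k)) ≤
      ENNReal.ofReal ((2 * Q.toReal)^k / k.factorial) * (M * N s (f - h)) := by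
    intro k
    rw [← smul_sub, N_smul]
    have e : ‖((k.factorial : ℂ)⁻¹)‖ₑ = ENNReal.ofReal ((k.factorial:ℝ)⁻¹) := by
      rw [← ofReal_norm]; simp
    have e2 : (Q:ℝ≥0∞) = ENNReal.ofReal Q.toReal := (ENNReal.ofReal_toReal hQt.ne).symm
    have hk : (k:ℝ≥0∞) ≤ 2^k := by exact_mod_cast Nat.lt_two_pow_self.le
    rw [e]
    calc _ ≤ ENNReal.ofReal ((k.factorial:ℝ)⁻¹) * (2^k * Q^k * M * N s (f - h)) := by
          gcongr
          refine (hdiff k).trans ?_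
          gcongr
      _ = ENNReal.ofReal ((k.factorial:ℝ)⁻¹) * (2 * Q)^k * (M * N s (f - h)) := by
        rw [mul_pow]; ring
      _ = _ := by
        congr 1
        rw [e2, show (2:ℝ≥0∞) = ENNReal.ofReal 2 by simp, ← ENNReal.ofReal_mul (by norm_num),
          ← ENNReal.ofReal_pow (by positivity), ← ENNReal.ofReal_mul (by positivity)]
        simp only [ENNReal.toReal_ofReal ENNReal.toReal_nonneg]
        congr 1; ring
  refine (Finset.sum_le_sum fun k _ => hterm k).trans ?_
  rw [← Finset.sum_mul, mul_assoc]
  gcongr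
  rw [← ENNReal.ofReal_sum_of_nonneg (fun _ _ => by positivity)]
  apply ENNReal.ofReal_le_ofReal
  rw [Real.exp_eq_exp_ℝ, NormedSpace.exp_eq_tsum_div]
  exact (Real.summable_pow_div_factorial _).sum_le_tsum F (fun _ _ => by positivity)

end circle
end Nemytskii

namespace Nemytskii

section circle
variable {T : ℝ} [hT : Fact (0 < T)]

lemma exp_apply (f : C(AddCircle T, ℂ)) (x : AddCircle T) :
    (NormedSpace.exp f) x = Complex.exp (f x) := by
  rw [Complex.exp_eq_exp_ℂ]
  have h1 := (ContinuousMap.evalCLM ℂ x).hasSum (NormedSpace.exp_series_hasSum_exp' (𝕂 := ℂ) f)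
  have h2 := NormedSpace.exp_series_hasSum_exp' (𝕂 := ℂ) (f x)
  exact h1.unique h2

/-- the characters `ξ ↦ e^{2π i ⟨ξ, v⟩}` with values in continuous functions -/
noncomputable def chi (v : C(AddCircle T, ℂ)) : C(ℂ, C(AddCircle T, ℂ)) :=
  ContinuousMap.curry ⟨fun p : ℂ × AddCircle T =>
    Complex.exp ((2 * π * inner ℝ p.1 (v p.2) : ℝ) * Complex.I), by fun_prop⟩

lemma chi_apply (v : C(AddCircle T, ℂ)) (ξ : ℂ) (x : AddCircle T) :
    chi v ξ x = Complex.exp ((2 * π * inner ℝ ξ (v x) : ℝ) * Complex.I) := rfl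

/-- phase function -/
noncomputable def phase (n : ℕ) (ξ : ℂ) (v : C(AddCircle T, ℂ)) : C(AddCircle T, ℂ) :=
  (π * Complex.I / n : ℂ) • (star ξ • v + ξ • star v)

lemma phase_apply (n : ℕ) (ξ : ℂ) (v : C(AddCircle T, ℂ)) (x : AddCircle T) :
    phase n ξ v x = ((2 * π * inner ℝ ξ (v x) / n : ℝ) : ℂ) * Complex.I := by
  have h : star ξ * v x + ξ * star (v x) = ((2 * inner ℝ ξ (v x) : ℝ) : ℂ) := by
    apply Complex.ext <;> simp [Complex.inner] <;> ring
  have h2 : phase n ξ v x = (π * Complex.I / n : ℂ) * (star ξ * v x + ξ * star (v x)) := rfl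
  rw [h2, h]; push_cast; ring

lemma phase_sub (n : ℕ) (ξ : ℂ) (v u : C(AddCircle T, ℂ)) :
    phase n ξ v - phase n ξ u = phase n ξ (v - u) := by
  unfold phase
  rw [star_sub, smul_sub, smul_sub, ← smul_sub]
  congr 1; abel

lemma N_phase (s : ℝ) (n : ℕ) (hn : 0 < n) (ξ : ℂ) (hξ : ‖ξ‖ ≤ n) (v : C(AddCircle T, ℂ)) :
    N s (phase n ξ v) ≤ ENNReal.ofReal (2 * π) * N s v := by
  unfold phase
  rw [N_smul]
  have h := N_add s (star ξ • v) (ξ • star v)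
  rw [N_smul, N_smul, N_star] at h
  have hn' : (0:ℝ) < n := by exact_mod_cast hn
  have e1 : ‖star ξ‖ₑ = ENNReal.ofReal ‖ξ‖ := by rw [← ofReal_norm, norm_star]
  have e2 : ‖ξ‖ₑ = ENNReal.ofReal ‖ξ‖ := by rw [← ofReal_norm]
  have e3 : ‖(π * Complex.I / n : ℂ)‖ₑ = ENNReal.ofReal (π / n) := by
    rw [← ofReal_norm]; simp [abs_of_pos Real.pi_pos]
  rw [e1, e2] at h
  rw [e3]
  calc _ ≤ ENNReal.ofReal (π / n) * (ENNReal.ofReal ‖ξ‖ * N s v + ENNReal.ofReal ‖ξ‖ * N s v) := by gcongr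
    _ = ENNReal.ofReal (π / n) * (ENNReal.ofReal 2 * ENNReal.ofReal ‖ξ‖) * N s v := by
      rw [ENNReal.ofReal_ofNat]; ring
    _ = ENNReal.ofReal (π / n * (2 * ‖ξ‖)) * N s v := by
      rw [ENNReal.ofReal_mul (by positivity : 0 ≤ π / n), ENNReal.ofReal_mul (by norm_num : (0:ℝ) ≤ 2)]
    _ ≤ _ := by
      refine mul_le_mul_left (ENNReal.ofReal_le_ofReal ?_) _
      rw [div_mul_eq_mul_div, div_le_iff₀ hn']
      nlinarith [Real.pi_pos]

lemma chi_eq (n : ℕ) (hn : 0 < n) (ξ : ℂ) (v : C(AddCircle T, ℂ)) :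
    chi v ξ = (NormedSpace.exp (phase n ξ v)) ^ n := by
  ext x
  have hn' : (n:ℂ) ≠ 0 := by exact_mod_cast hn.ne'
  rw [ContinuousMap.pow_apply, exp_apply, chi_apply, ← Complex.exp_nat_mul, phase_apply]
  congr 1
  push_cast; field_simp

lemma exp_phase_unimod (n : ℕ) (ξ : ℂ) (v : C(AddCircle T, ℂ)) (x : AddCircle T) :
    ‖(NormedSpace.exp (phase n ξ v)) x‖ = 1 := by
  rw [exp_apply, phase_apply, Complex.norm_exp_ofReal_mul_I]

lemma N_chi {s : ℝ} (hs : 1/2 < s) : ∃ q : ℕ, ∀ R : ℝ≥0∞, R < ⊤ → ∃ K : ℝ≥0∞, K < ⊤ ∧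
    ∀ v u : C(AddCircle T, ℂ), N s v ≤ R → N s u ≤ R → ∀ ξ : ℂ,
      N s (chi v ξ - chi u ξ) ≤ K * ENNReal.ofReal (1 + ‖ξ‖) ^ q * N s (v - u) := by
  obtain ⟨p, hp⟩ := N_pow_growth (T := T) hs
  obtain ⟨M, hM1, hMt, hmul⟩ := N_mul (T := T) hs
  refine ⟨1 + p + p, fun R hR => ?_⟩
  set R' := ENNReal.ofReal (2 * π) * R with hR'
  have hR't : R' < ⊤ := ENNReal.mul_lt_top ENNReal.ofReal_lt_top hR
  obtain ⟨K₁, hK₁, hexp⟩ := N_exp (T := T) hs R' hR't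
  have hBt : 1 + K₁ * R' < ⊤ := ENNReal.add_lt_top.2 ⟨ENNReal.one_lt_top, ENNReal.mul_lt_top hK₁ hR't⟩
  obtain ⟨K₂, hK₂, hgrow⟩ := hp _ hBt
  refine ⟨M * M * K₁ * ENNReal.ofReal (2 * π) * K₂ * K₂, ?_, ?_⟩
  · finiteness
  intro v u hv hu ξ
  set n := ⌊‖ξ‖⌋₊ + 1 with hn
  have hn0 : 0 < n := Nat.succ_pos _
  have hξn : ‖ξ‖ ≤ n := by rw [hn]; push_cast; exact (Nat.lt_floor_add_one _).le
  have hnξ : (n:ℝ≥0∞) ≤ ENNReal.ofReal (1 + ‖ξ‖) := by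
    rw [← ENNReal.ofReal_natCast]
    apply ENNReal.ofReal_le_ofReal
    have := Nat.floor_le (norm_nonneg ξ)
    rw [hn]; push_cast; linarith
  rw [chi_eq n hn0, chi_eq n hn0]
  have hpv : N s (phase n ξ v) ≤ R' := (N_phase s n hn0 ξ hξn v).trans (by rw [hR']; gcongr)
  have hpu : N s (phase n ξ u) ≤ R' := (N_phase s n hn0 ξ hξn u).trans (by rw [hR']; gcongr)
  have hB : ∀ f : C(AddCircle T, ℂ), N s f ≤ R' → N s (NormedSpace.exp f) ≤ 1 + K₁ * R' := by
    intro f hf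
    have h0 := hexp f 0 hf (by rw [N_zero]; exact zero_le)
    rw [NormedSpace.exp_zero, sub_zero] at h0
    have h1 := N_add s (1 : C(AddCircle T, ℂ)) (NormedSpace.exp f - 1)
    rw [add_sub_cancel, N_one] at h1
    refine h1.trans ?_
    gcongr
    exact h0.trans (by gcongr)
  have gv := hgrow _ (exp_phase_unimod n ξ v) (hB _ hpv) n hn0
  have gu := hgrow _ (exp_phase_unimod n ξ u) (hB _ hpu) n hn0
  have hd := hexp _ _ hpv hpu
  rw [phase_sub] at hd
  have hd2 := hd.trans (mul_le_mul_right (N_phase s n hn0 ξ hξn (v - u)) K₁)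
  set E := NormedSpace.exp (phase n ξ v)
  set F := NormedSpace.exp (phase n ξ u)
  have hFt : ∀ j ≤ n, N s (F ^ j) < ⊤ := fun j hj => (gu j hj).trans_lt (by finiteness)
  have hEt : ∀ j ≤ n, N s (E ^ j) < ⊤ := fun j hj => (gv j hj).trans_lt (by finiteness)
  have hEFt : N s (E - F) < ⊤ := by
    refine (N_sub _ _ _).trans_lt (ENNReal.add_lt_top.2 ⟨?_, ?_⟩)
    · simpa using hEt 1 hn0
    · simpa using hFt 1 hn0
  rw [← (Commute.all E F).geom_sum₂_mul]
  have hsum : N s (∑ i ∈ Finset.range n, E ^ i * F ^ (n - 1 - i)) ≤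
      n * (M * (K₂ * (n:ℝ≥0∞)^p) * (K₂ * (n:ℝ≥0∞)^p)) := by
    refine (N_sum _ _ _).trans ?_
    refine (Finset.sum_le_sum (g := fun _ => M * (K₂ * (n:ℝ≥0∞)^p) * (K₂ * (n:ℝ≥0∞)^p)) fun i hi => ?_).trans ?_
    · have hi' := Finset.mem_range.1 hi
      refine (hmul _ _ (hFt _ (by omega))).trans ?_
      gcongr
      · exact gv i hi'.le
      · exact gu _ (by omega)
    · simp
  calc _ ≤ _ := hmul _ _ hEFt
    _ ≤ M * (n * (M * (K₂ * (n:ℝ≥0∞)^p) * (K₂ * (n:ℝ≥0∞)^p))) *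
        (K₁ * (ENNReal.ofReal (2 * π) * N s (v - u))) := by gcongr
    _ = M * M * K₁ * ENNReal.ofReal (2 * π) * K₂ * K₂ * (n:ℝ≥0∞)^(1 + p + p) * N s (v - u) := by ring
    _ ≤ _ := by gcongr

/-- Minkowski integral inequality for the Sobolev norm -/
lemma N_integral (s : ℝ) (H : ℂ → C(AddCircle T, ℂ)) (hH : Integrable H) :
    N s (∫ ξ, H ξ) ≤ ∫⁻ ξ, N s (H ξ) := by
  apply n2_le_of_finset
  intro F
  let P : C(AddCircle T, ℂ) →L[ℂ] EuclideanSpace ℂ F :=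
    ((EuclideanSpace.equiv F ℂ).symm : (F → ℂ) →L[ℂ] EuclideanSpace ℂ F).comp
      (ContinuousLinearMap.pi fun l : F => ((W T l ^ s : ℝ) : ℂ) • fcL (l : ℤ))
  have hP : ∀ f, ‖P f‖ₑ ^ (2:ℝ) = ∑ l ∈ F, (w T s l * ‖fcL l f‖ₑ) ^ (2:ℝ) := by
    intro f
    rw [← Finset.sum_coe_sort F (fun l => (w T s l * ‖fcL l f‖ₑ) ^ (2:ℝ)), ← ofReal_norm,
      ENNReal.ofReal_rpow_of_nonneg (norm_nonneg _) (by norm_num), Real.rpow_ofNat,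
      EuclideanSpace.norm_sq_eq, ENNReal.ofReal_sum_of_nonneg (fun _ _ => by positivity)]
    refine Finset.sum_congr rfl fun l _ => ?_
    have hW := W_pos T l
    have : (P f) l = ((W T l ^ s : ℝ) : ℂ) * fcL (l : ℤ) f := rfl
    rw [this, norm_mul, Complex.norm_of_nonneg (by positivity), w, ← ofReal_norm,
      ← ENNReal.ofReal_mul (by positivity), ENNReal.ofReal_rpow_of_nonneg (by positivity) (by norm_num),
      Real.rpow_ofNat]
  rw [← hP]
  gcongr
  rw [← P.integral_comp_comm hH]
  refine (enorm_integral_le_lintegral_enorm _).trans ?_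
  refine lintegral_mono fun ξ => ?_
  rw [← ENNReal.rpow_le_rpow_iff (by norm_num : (0:ℝ) < 2), hP, N, n2_sq]
  exact ENNReal.sum_le_tsum F

open FourierTransform SchwartzMap in
lemma schwartz_comp {s : ℝ} (hs : 1/2 < s) (G : 𝓢(ℂ, ℂ)) (R : ℝ≥0∞) (hR : R < ⊤) :
    ∃ K : ℝ≥0∞, K < ⊤ ∧ ∀ v u f : C(AddCircle T, ℂ), N s v ≤ R → N s u ≤ R →
      (∀ x, f x = G (v x) - G (u x)) → N s f ≤ K * N s (v - u) := by
  obtain ⟨q, hq⟩ := N_chi (T := T) hs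
  obtain ⟨K, hK, hchi⟩ := hq R hR
  set Gh : 𝓢(ℂ, ℂ) := 𝓕 G with hGh
  have hint : ∀ k : ℕ, Integrable (fun ξ => (1 + ‖ξ‖)^k * ‖Gh ξ‖) := by
    intro k
    have h : (fun ξ => (1 + ‖ξ‖)^k * ‖Gh ξ‖) =
        fun ξ => ∑ i ∈ Finset.range (k+1), (k.choose i : ℝ) * (‖ξ‖^i * ‖Gh ξ‖) := by
      funext ξ
      rw [add_comm, add_pow, Finset.sum_mul]
      refine Finset.sum_congr rfl fun i _ => ?_
      rw [one_pow]; ring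
    rw [h]
    exact integrable_finsetSum _ fun i _ => (Gh.integrable_pow_mul volume i).const_mul _
  refine ⟨K * ∫⁻ ξ, ENNReal.ofReal ((1 + ‖ξ‖)^q * ‖Gh ξ‖), ?_, ?_⟩
  · refine ENNReal.mul_lt_top hK ?_
    have := (hint q).2
    rw [hasFiniteIntegral_iff_ofReal (Filter.Eventually.of_forall fun ξ => by positivity)] at this
    exact this
  intro v u f hv hu hf
  set H : ℂ → C(AddCircle T, ℂ) := fun ξ => Gh ξ • (chi v ξ - chi u ξ) with hH
  have hHc : Continuous H := by
    have := Gh.continuous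
    have h1 := (chi v).continuous
    have h2 := (chi u).continuous
    exact this.smul (h1.sub h2)
  have hchib : ∀ (v : C(AddCircle T, ℂ)) ξ, ‖chi v ξ‖ ≤ 1 := by
    intro v ξ
    rw [ContinuousMap.norm_le _ (by norm_num)]
    intro x
    rw [chi_apply, Complex.norm_exp_ofReal_mul_I]
  have hHi : Integrable H := by
    refine (Gh.integrable.norm.mul_const 2).mono' hHc.aestronglyMeasurable
      (Filter.Eventually.of_forall fun ξ => ?_)
    rw [hH, norm_smul]
    gcongr
    refine (norm_sub_le _ _).trans ?_
    linarith [hchib v ξ, hchib u ξ]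
  have hinv : ∀ z, G z = ∫ ξ, Complex.exp ((2 * π * inner ℝ ξ z : ℝ) * Complex.I) • Gh ξ := by
    intro z
    have h1 := G.continuous.fourierInv_fourier_eq G.integrable (by
      rw [← SchwartzMap.fourier_coe]; exact (𝓕 G).integrable)
    have h2 := congrFun h1 z
    rw [Real.fourierInv_eq'] at h2
    rw [← h2]
    rfl
  have hii : ∀ z, Integrable (fun ξ : ℂ => Complex.exp ((2 * π * inner ℝ ξ z : ℝ) * Complex.I) • Gh ξ) := by
    intro z
    refine Gh.integrable.norm.mono' ?_ (Filter.Eventually.of_forall fun ξ => ?_)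
    · apply Continuous.aestronglyMeasurable
      have := Gh.continuous
      fun_prop
    · rw [norm_smul, Complex.norm_exp_ofReal_mul_I, one_mul]
  have hfH : f = ∫ ξ, H ξ := by
    ext x
    rw [hf, hinv, hinv, ← integral_sub (hii _) (hii _)]
    have := (ContinuousMap.evalCLM ℂ x : C(AddCircle T, ℂ) →L[ℂ] ℂ).integral_comp_comm hHi
    refine Eq.trans ?_ this
    congr 1; funext ξ
    change _ = Gh ξ * (chi v ξ x - chi u ξ x)
    rw [chi_apply, chi_apply, smul_eq_mul, smul_eq_mul]; ring
  rw [hfH]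
  refine (N_integral s H hHi).trans ?_
  calc _ ≤ ∫⁻ ξ, (K * N s (v - u)) * ENNReal.ofReal ((1 + ‖ξ‖)^q * ‖Gh ξ‖) := by
        refine lintegral_mono fun ξ => ?_
        rw [hH]
        simp only [N_smul]
        rw [ENNReal.ofReal_mul (by positivity), ofReal_norm, ENNReal.ofReal_pow (by positivity)]
        calc _ ≤ ‖Gh ξ‖ₑ * (K * ENNReal.ofReal (1 + ‖ξ‖) ^ q * N s (v - u)) := by
              gcongr; exact hchi v u hv hu ξ
          _ = _ := by ring
    _ = (K * N s (v - u)) * ∫⁻ ξ, ENNReal.ofReal ((1 + ‖ξ‖)^q * ‖Gh ξ‖) := by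
        rw [lintegral_const_mul]
        have hGc := Gh.continuous
        exact (by fun_prop : Continuous fun ξ => (1 + ‖ξ‖)^q * ‖Gh ξ‖).measurable.ennreal_ofReal
    _ = _ := by ring

open scoped ContDiff in
lemma smooth_comp {s : ℝ} (hs : 1/2 < s) (g : ℂ → ℂ) (hg : ContDiff ℝ ∞ g) (R : ℝ≥0∞) (hR : R < ⊤) :
    ∃ K : ℝ≥0∞, K < ⊤ ∧ ∀ v u f : C(AddCircle T, ℂ), N s v ≤ R → N s u ≤ R →
      (∀ x, f x = g (v x) - g (u x)) → N s f ≤ K * N s (v - u) := by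
  set M := n2 (w T (-s)) * R with hM
  have hMt : M < ⊤ := ENNReal.mul_lt_top (w_summable T hT.out s hs) hR
  let χ : ContDiffBump (0:ℂ) := ⟨M.toReal + 1, M.toReal + 2, by positivity, by linarith⟩
  have hc : HasCompactSupport (fun z => χ z • g z) := χ.hasCompactSupport.smul_right
  have hd : ContDiff ℝ ∞ (fun z => χ z • g z) := χ.contDiff.smul hg
  obtain ⟨K, hK, h⟩ := schwartz_comp (T := T) hs (hc.toSchwartzMap hd) R hR
  refine ⟨K, hK, fun v u f hv hu hf => h v u f hv hu fun x => ?_⟩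
  have key : ∀ v : C(AddCircle T, ℂ), N s v ≤ R → hc.toSchwartzMap hd (v x) = g (v x) := by
    intro v hv
    have h1 : ‖v x‖ₑ ≤ M := (norm_le_N hs v (hv.trans_lt hR) x).trans (by rw [hM]; gcongr)
    have h2 : ‖v x‖ ≤ M.toReal := by
      rw [← toReal_enorm]; exact ENNReal.toReal_mono hMt.ne h1
    rw [HasCompactSupport.toSchwartzMap_toFun, χ.one_of_mem_closedBall, one_smul]
    rw [mem_closedBall_zero_iff]
    change ‖v x‖ ≤ M.toReal + 1
    linarith
  rw [key v hv, key u hu, hf]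

lemma summand_eq (s : ℝ) (f : C(AddCircle T, ℂ)) (l : ℤ) :
    (w T s l * ‖fcL l f‖ₑ) ^ (2:ℝ) = ENNReal.ofReal (sobolevSummand T s f l) := by
  have hW := W_pos T l
  rw [w, ← ofReal_norm, ← ENNReal.ofReal_mul (by positivity),
    ENNReal.ofReal_rpow_of_nonneg (by positivity) (by norm_num), Real.rpow_ofNat, mul_pow]
  congr 1
  unfold sobolevSummand
  rw [fcL_apply]
  congr 1
  have : 0 ≤ 1 + (2*π*l/T)^2 := by positivity
  rw [W, Real.sqrt_eq_rpow, ← Real.rpow_mul this, ← Real.rpow_natCast, ← Real.rpow_mul this]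
  congr 1; push_cast; ring

lemma summand_nonneg (s : ℝ) (f : AddCircle T → ℂ) (l : ℤ) : 0 ≤ sobolevSummand T s f l := by
  unfold sobolevSummand; positivity

lemma N_eq (s : ℝ) (f : C(AddCircle T, ℂ)) (h : Summable (sobolevSummand T s f)) :
    N s f = ENNReal.ofReal (Real.sqrt (∑' l : ℤ, sobolevSummand T s f l)) := by
  unfold N n2
  simp_rw [summand_eq]
  rw [← ENNReal.ofReal_tsum_of_nonneg (summand_nonneg s f) h, Real.sqrt_eq_rpow,
    ENNReal.ofReal_rpow_of_nonneg (tsum_nonneg (summand_nonneg s f)) (by norm_num)]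

lemma summable_of_N (s : ℝ) (f : C(AddCircle T, ℂ)) (h : N s f < ⊤) :
    Summable (sobolevSummand T s f) := by
  have h2 : n2 (fun l => w T s l * ‖fcL l f‖ₑ) ^ (2:ℝ) < ⊤ := ENNReal.rpow_lt_top_of_nonneg (by norm_num) h.ne
  rw [n2_sq] at h2
  simp_rw [summand_eq] at h2
  have h3 := ENNReal.summable_toReal h2.ne
  simpa [ENNReal.toReal_ofReal (summand_nonneg s f _)] using h3

end circle
end Nemytskii

/-- Local Lipschitz property of the composition operator `u ↦ g ∘ u` on `H^s`,
`s > 1/2`, with constant `α(g,R)` nondecreasing in `R`. -/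
theorem stmt12 (T : ℝ) [hT : Fact (0 < T)] (s : ℝ) (hs : 1/2 < s)
    (g : ℂ → ℂ) (hg : ContDiff ℝ (⊤ : ℕ∞) g) :
    ∃ α : ℝ → ℝ, Monotone α ∧ (∀ R, 0 < R → 0 < α R) ∧
      ∀ R, 0 < R → ∀ v w : AddCircle T → ℂ, Continuous v → Continuous w →
        Summable (sobolevSummand T s v) → Summable (sobolevSummand T s w) →
        Real.sqrt (∑' l : ℤ, sobolevSummand T s v l) ≤ R →
        Real.sqrt (∑' l : ℤ, sobolevSummand T s w l) ≤ R →
        Summable (sobolevSummand T s (fun x => g (v x) - g (w x))) ∧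
        Real.sqrt (∑' l : ℤ, sobolevSummand T s (fun x => g (v x) - g (w x)) l)
          ≤ α R * Real.sqrt (∑' l : ℤ, sobolevSummand T s (fun x => v x - w x) l) := by
  have H := fun n : ℕ => Nemytskii.smooth_comp (T := T) hs g hg (n : ℝ≥0∞) (ENNReal.natCast_lt_top n)
  choose K hK hKb using H
  refine ⟨fun R => 1 + ∑ j ∈ Finset.range (⌈R⌉₊ + 1), (K j).toReal, ?_, ?_, ?_⟩
  · intro R R' h
    have h1 : ⌈R⌉₊ + 1 ≤ ⌈R'⌉₊ + 1 := Nat.succ_le_succ (Nat.ceil_mono h)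
    have := Finset.sum_le_sum_of_subset_of_nonneg (f := fun j => (K j).toReal)
      (Finset.range_mono h1) (fun _ _ _ => ENNReal.toReal_nonneg)
    simpa using this
  · intro R _
    have : 0 ≤ ∑ j ∈ Finset.range (⌈R⌉₊ + 1), (K j).toReal :=
      Finset.sum_nonneg fun _ _ => ENNReal.toReal_nonneg
    show 0 < 1 + ∑ j ∈ Finset.range (⌈R⌉₊ + 1), (K j).toReal
    linarith
  intro R hR v u hv hu hvs hus hvR huR
  let v' : C(AddCircle T, ℂ) := ⟨v, hv⟩
  let u' : C(AddCircle T, ℂ) := ⟨u, hu⟩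
  let f' : C(AddCircle T, ℂ) := ⟨fun x => g (v x) - g (u x), by
    have := hg.continuous; fun_prop⟩
  set n := ⌈R⌉₊ with hn
  have hRn : ENNReal.ofReal R ≤ n := by
    rw [← ENNReal.ofReal_natCast]
    exact ENNReal.ofReal_le_ofReal (Nat.le_ceil R)
  have e1 : Nemytskii.N s v' ≤ n := by
    rw [Nemytskii.N_eq s v' hvs]; exact (ENNReal.ofReal_le_ofReal hvR).trans hRn
  have e2 : Nemytskii.N s u' ≤ n := by
    rw [Nemytskii.N_eq s u' hus]; exact (ENNReal.ofReal_le_ofReal huR).trans hRn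
  have hd : Nemytskii.N s (v' - u') < ⊤ := (Nemytskii.N_sub _ _ _).trans_lt
    (ENNReal.add_lt_top.2 ⟨e1.trans_lt (ENNReal.natCast_lt_top n), e2.trans_lt (ENNReal.natCast_lt_top n)⟩)
  have main := hKb n v' u' f' e1 e2 (fun x => rfl)
  have hfs := Nemytskii.summable_of_N s f' (main.trans_lt (ENNReal.mul_lt_top (hK n) hd))
  refine ⟨hfs, ?_⟩
  have hds := Nemytskii.summable_of_N s (v' - u') hd
  rw [Nemytskii.N_eq s f' hfs, Nemytskii.N_eq s (v' - u') hds, ← ENNReal.ofReal_toReal (hK n).ne,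
    ← ENNReal.ofReal_mul ENNReal.toReal_nonneg, ENNReal.ofReal_le_ofReal_iff (by positivity)] at main
  refine main.trans ?_
  show (K n).toReal * Real.sqrt (∑' l : ℤ, sobolevSummand T s (fun x => v x - u x) l) ≤ _
  gcongr
  have := Finset.single_le_sum (f := fun j => (K j).toReal) (fun _ _ => ENNReal.toReal_nonneg)
    (Finset.mem_range.2 (Nat.lt_succ_self n))
  simp only [Nat.succ_eq_add_one] at this
  linarith
end

section
/- Let g ∈ C^∞(ℂ, ℂ) and s > 1/2. There is a nondecreasing function χ_g : ℝ₊ → ℝ₊ such that for all u ∈ H^s, ‖g(u)‖_s ≤ ‖g(0)‖_s + χ_g(‖u‖_{L^∞}) ‖u‖_s. -/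
open scoped Real

open scoped Real
open MeasureTheory ENNReal NNReal

/-! ### Smooth dependence of parametric integrals and Hadamard's lemma -/

theorem moser_contDiff_integral (n : ℕ) : ∀ {E W : Type} [NormedAddCommGroup E] [NormedSpace ℝ E]
    [FiniteDimensional ℝ E] [NormedAddCommGroup W] [NormedSpace ℝ W] [CompleteSpace W]
    (F : E × ℝ → W), ContDiff ℝ (n : ℕ∞) F →
    ContDiff ℝ (n : ℕ∞) (fun x => ∫ t in (0:ℝ)..1, F (x, t)) := by
  induction n with
  | zero =>
    intro E W _ _ _ _ _ _ F hF
    have hc : Continuous F := hF.continuous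
    have : Continuous (fun x => ∫ t in (0:ℝ)..1, F (x, t)) :=
      intervalIntegral.continuous_parametric_intervalIntegral_of_continuous'
        (f := fun x t => F (x, t)) (by exact hc) 0 1
    exact contDiff_zero.2 this
  | succ n ih =>
    intro E W _ _ _ _ _ _ F hF
    have hF1 : ContDiff ℝ ((n : WithTop ℕ∞) + 1) F := by
      convert! hF using 1
    have hd : ContDiff ℝ (n : WithTop ℕ∞)
        (fun p : E × ℝ => (fderiv ℝ F p).comp (ContinuousLinearMap.inl ℝ E ℝ)) := by
      have h1 : ContDiff ℝ (n : WithTop ℕ∞) (fderiv ℝ F) := hF1.fderiv_right le_rfl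
      exact h1.clm_comp contDiff_const
    have key := contDiff_succ_iff_hasFDerivAt (𝕜 := ℝ) (n := n)
      (f := fun x => ∫ t in (0:ℝ)..1, F (x, t))
    have goal : ContDiff ℝ ((n : WithTop ℕ∞) + 1) (fun x => ∫ t in (0:ℝ)..1, F (x, t)) := by
      rw [key]
      refine ⟨fun x => ∫ t in (0:ℝ)..1, (fderiv ℝ F (x, t)).comp (ContinuousLinearMap.inl ℝ E ℝ),
        ?_, ?_⟩
      · exact ih (fun p : E × ℝ => (fderiv ℝ F p).comp (ContinuousLinearMap.inl ℝ E ℝ)) hd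
      · intro x₀
        have hcd : Continuous
          (fun p : E × ℝ => (fderiv ℝ F p).comp (ContinuousLinearMap.inl ℝ E ℝ)) := hd.continuous
        have hK : IsCompact (Metric.closedBall x₀ 1 ×ˢ Set.Icc (0:ℝ) 1) :=
          (isCompact_closedBall x₀ 1).prod isCompact_Icc
        obtain ⟨C, hC⟩ := hK.exists_bound_of_continuousOn hcd.continuousOn
        have hFc : Continuous F := hF.continuous
        refine intervalIntegral.hasFDerivAt_integral_of_dominated_of_fderiv_le
          (𝕜 := ℝ) (μ := volume) (s := Metric.closedBall x₀ 1)
          (F := fun x t => F (x, t)) (bound := fun _ => C)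
          (F' := fun x t => (fderiv ℝ F (x, t)).comp (ContinuousLinearMap.inl ℝ E ℝ))
          (Metric.closedBall_mem_nhds x₀ one_pos) ?_ ?_ ?_ ?_ ?_ ?_
        · refine Filter.Eventually.of_forall fun x => ?_
          exact (Continuous.aestronglyMeasurable (by fun_prop))
        · exact Continuous.intervalIntegrable (by fun_prop) _ _
        · exact Continuous.aestronglyMeasurable
            (hcd.comp (by fun_prop : Continuous fun t : ℝ => (x₀, t)))
        · refine Filter.Eventually.of_forall fun t ht x hx => ?_
          rw [Set.uIoc_of_le zero_le_one] at ht
          exact hC (x, t) ⟨hx, ht.1.le, ht.2⟩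
        · exact continuous_const.intervalIntegrable _ _
        · refine Filter.Eventually.of_forall fun t ht x hx => ?_
          have h1 : HasFDerivAt F (fderiv ℝ F (x, t)) (x, t) :=
            ((hF1.differentiable (by simp)) (x, t)).hasFDerivAt
          exact h1.comp x (hasFDerivAt_prodMk_left x t)
    convert! goal using 1

theorem moser_hadamard {V W : Type} [NormedAddCommGroup V] [NormedSpace ℝ V]
    [FiniteDimensional ℝ V] [NormedAddCommGroup W] [NormedSpace ℝ W] [CompleteSpace W]
    (G : V → W) (hG : ContDiff ℝ (⊤ : ℕ∞) G) :
    ∃ H : V × V → (V →L[ℝ] W), ContDiff ℝ (⊤ : ℕ∞) H ∧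
      ∀ x y, G y - G x = H (x, y) (y - x) := by
  have hd : ContDiff ℝ (⊤ : ℕ∞) (fderiv ℝ G) := hG.fderiv_right (by simp)
  refine ⟨fun p => ∫ t in (0:ℝ)..1, fderiv ℝ G (p.1 + t • (p.2 - p.1)), ?_, ?_⟩
  · rw [contDiff_infty]
    intro n
    refine moser_contDiff_integral n
      (fun q : (V × V) × ℝ => fderiv ℝ G (q.1.1 + q.2 • (q.1.2 - q.1.1))) ?_
    refine ContDiff.comp (hd.of_le (by exact_mod_cast le_top)) ?_
    fun_prop
  · intro x y
    have hc : Continuous (fun t : ℝ => fderiv ℝ G (x + t • (y - x))) :=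
      hd.continuous.comp (by fun_prop)
    have h2 : (∫ t in (0:ℝ)..1, fderiv ℝ G (x + t • (y - x))) (y - x)
        = ∫ t in (0:ℝ)..1, fderiv ℝ G (x + t • (y - x)) (y - x) := by
      rw [ContinuousLinearMap.intervalIntegral_apply (hc.intervalIntegrable _ _)]
    show _ = (∫ t in (0:ℝ)..1, fderiv ℝ G (x + t • (y - x))) (y - x)
    rw [h2]
    have h3 : ∀ t ∈ Set.uIcc (0:ℝ) 1, HasDerivAt (fun t : ℝ => G (x + t • (y - x)))
        (fderiv ℝ G (x + t • (y - x)) (y - x)) t := by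
      intro t _
      have ha : HasFDerivAt G (fderiv ℝ G (x + t • (y - x))) (x + t • (y - x)) :=
        ((hG.differentiable (by simp)) _).hasFDerivAt
      have hb : HasDerivAt (fun t : ℝ => x + t • (y - x)) (y - x) t := by
        simpa using ((hasDerivAt_id t).smul_const (y - x)).const_add x
      exact ha.comp_hasDerivAt t hb
    rw [intervalIntegral.integral_eq_sub_of_hasDerivAt h3
      ((hc.clm_apply continuous_const).intervalIntegrable _ _)]
    simp

/-! ### Difference operators and the discrete chain rule -/

def moserD {X V : Type} [Sub V] (τ : X → X) (f : X → V) : X → V := fun x => f (τ x) - f x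

noncomputable def moserP (k m : ℕ) : ℝ≥0∞ := (2 * k : ℝ≥0∞) / m

theorem moserP_inv (k m : ℕ) (hk : 1 ≤ k) : (moserP k m)⁻¹ = m / (2 * k : ℝ≥0∞) := by
  unfold moserP
  rw [ENNReal.inv_div]
  · left; exact ENNReal.natCast_ne_top m
  · right
    have : (k : ℝ≥0∞) ≠ 0 := by exact_mod_cast (by omega : k ≠ 0)
    exact mul_ne_zero two_ne_zero this

theorem moserP_holder (k a b : ℕ) (hk : 1 ≤ k) :
    ENNReal.HolderTriple (moserP k a) (moserP k b) (moserP k (a + b)) := by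
  constructor
  rw [moserP_inv _ _ hk, moserP_inv _ _ hk, moserP_inv _ _ hk, ← ENNReal.add_div]
  push_cast
  rfl

theorem moserP_one_le (k m : ℕ) (hk : 1 ≤ k) (hm : m ≤ 2 * k) : 1 ≤ moserP k m := by
  rw [← ENNReal.inv_le_inv, moserP_inv _ _ hk, inv_one]
  refine ENNReal.div_le_of_le_mul ?_
  rw [one_mul]
  exact_mod_cast hm

theorem moserP_zero (k : ℕ) (hk : 1 ≤ k) : moserP k 0 = ⊤ := by
  rw [← inv_inv (moserP k 0), moserP_inv _ _ hk]
  simp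

theorem moserP_self (k : ℕ) (hk : 1 ≤ k) : moserP k k = 2 := by
  unfold moserP
  have : (k : ℝ≥0∞) ≠ 0 := by exact_mod_cast (by omega : k ≠ 0)
  exact ENNReal.mul_div_cancel_right this (ENNReal.natCast_ne_top k)

theorem moserD_iter_comp {X V : Type} [NormedAddCommGroup V] {τ : X → X}
    (f : X → V) (n : ℕ) : (moserD τ)^[n] (fun x => f (τ x)) = fun x => (moserD τ)^[n] f (τ x) := by
  induction n with
  | zero => rfl
  | succ n ih =>
    rw [Function.iterate_succ_apply', ih, Function.iterate_succ_apply']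
    rfl

theorem moserD_iter_add {X V : Type} [NormedAddCommGroup V] {τ : X → X}
    (f g : X → V) (n : ℕ) : (moserD τ)^[n] (f + g) = (moserD τ)^[n] f + (moserD τ)^[n] g := by
  induction n generalizing f g with
  | zero => rfl
  | succ n ih =>
    rw [Function.iterate_succ_apply, Function.iterate_succ_apply, Function.iterate_succ_apply, ← ih]
    congr 1
    ext x
    simp only [moserD, Pi.add_apply]
    abel

theorem moserD_iter_pair {X V : Type} [NormedAddCommGroup V] {τ : X → X}
    (f : X → V) (n : ℕ) : (moserD τ)^[n] (fun x => (f x, f (τ x)))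
      = fun x => ((moserD τ)^[n] f x, (moserD τ)^[n] f (τ x)) := by
  induction n with
  | zero => rfl
  | succ n ih =>
    rw [Function.iterate_succ_apply', ih, Function.iterate_succ_apply']
    rfl

set_option linter.unusedSectionVars false

section chain

variable {X : Type} [TopologicalSpace X] [CompactSpace X] [SecondCountableTopology X]
  [MeasurableSpace X] [BorelSpace X] (μ : Measure X) [IsProbabilityMeasure μ]

theorem moserD_cont {V : Type} [NormedAddCommGroup V] {τ : X → X} (hτ : Continuous τ)
    {f : X → V} (hf : Continuous f) : Continuous (moserD τ f) :=
  (hf.comp hτ).sub hf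

theorem moserD_iter_cont {V : Type} [NormedAddCommGroup V] {τ : X → X} (hτ : Continuous τ)
    {f : X → V} (hf : Continuous f) (n : ℕ) : Continuous ((moserD τ)^[n] f) := by
  induction n with
  | zero => exact hf
  | succ n ih =>
    rw [Function.iterate_succ_apply']
    exact moserD_cont hτ ih

theorem moser_prod (k : ℕ) (hk : 1 ≤ k) {V W : Type} [NormedAddCommGroup V] [NormedSpace ℝ V]
    [NormedAddCommGroup W] [NormedSpace ℝ W] {τ : X → X} (hτ : Continuous τ)
    (hm : MeasurePreserving τ μ μ) (E : ℝ≥0∞) (A B : ℝ≥0) (n : ℕ) :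
    ∀ (p q : ℕ) (f : X → V →L[ℝ] W) (v : X → V), Continuous f → Continuous v →
    n + p + q ≤ k →
    (∀ a ≤ n, eLpNorm ((moserD τ)^[a] f) (moserP k (a + p)) μ
      ≤ A * E ^ (((a + p : ℕ) : ℝ) / k)) →
    (∀ a ≤ n, eLpNorm ((moserD τ)^[a] v) (moserP k (a + q)) μ
      ≤ B * E ^ (((a + q : ℕ) : ℝ) / k)) →
    eLpNorm ((moserD τ)^[n] (fun x => f x (v x))) (moserP k (n + p + q)) μ
      ≤ 2 ^ n * (A * B) * E ^ (((n + p + q : ℕ) : ℝ) / k) := by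
  have hk0 : (0 : ℝ) < k := by exact_mod_cast hk
  induction n with
  | zero =>
    intro p q f v hf hv hpq h1 h2
    have h1 := h1 0 le_rfl
    have h2 := h2 0 le_rfl
    simp only [Function.iterate_zero, id, zero_add] at h1 h2 ⊢
    have := moserP_holder k p q hk
    have := eLpNorm_le_eLpNorm_mul_eLpNorm_of_nnnorm (μ := μ) (p := moserP k p) (q := moserP k q)
      (r := moserP k (p + q)) hf.aestronglyMeasurable hv.aestronglyMeasurable
      (fun (L : V →L[ℝ] W) (w : V) => L w) 1
      (Filter.Eventually.of_forall fun x => by simpa using (f x).le_opNNNorm (v x))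
    refine this.trans ?_
    have e : E ^ (((p + q : ℕ) : ℝ) / k) = E ^ ((p : ℝ) / k) * E ^ ((q : ℝ) / k) := by
      rw [← ENNReal.rpow_add_of_nonneg _ _ (by positivity) (by positivity)]
      congr 1
      push_cast
      ring
    rw [e]
    calc _ ≤ 1 * (A * E ^ ((p : ℝ) / k)) * (B * E ^ ((q : ℝ) / k)) := by
            push_cast; gcongr
      _ = _ := by ring
  | succ n ih =>
    intro p q f v hf hv hpq h1 h2
    have hsplit : moserD τ (fun x => f x (v x))
        = (fun x => (moserD τ f) x (v (τ x))) + (fun x => f x (moserD τ v x)) := by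
      ext x
      simp only [moserD, Pi.add_apply, sub_apply, map_sub]
      abel
    rw [Function.iterate_succ_apply, hsplit, moserD_iter_add]
    have hc1 : Continuous (fun x => (moserD τ f) x (v (τ x))) :=
      (moserD_cont hτ hf).clm_apply (hv.comp hτ)
    have hc2 : Continuous (fun x => f x (moserD τ v x)) := hf.clm_apply (moserD_cont hτ hv)
    refine (eLpNorm_add_le (moserD_iter_cont hτ hc1 n).aestronglyMeasurable
      (moserD_iter_cont hτ hc2 n).aestronglyMeasurable
      (moserP_one_le _ _ hk (by omega))).trans ?_
    have t1 := ih (p + 1) q (moserD τ f) (fun x => v (τ x)) (moserD_cont hτ hf) (hv.comp hτ)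
      (by omega) (fun a ha => by
        have := h1 (a + 1) (by omega)
        rw [Function.iterate_succ_apply] at this
        rwa [show a + (p + 1) = a + 1 + p by ring])
      (fun a ha => by
        rw [moserD_iter_comp]
        have h3 := eLpNorm_comp_measurePreserving (p := moserP k (a + q)) (moserD_iter_cont hτ hv a).aestronglyMeasurable hm
        exact h3.le.trans (h2 a (by omega)))
    have t2 := ih p (q + 1) f (moserD τ v) hf (moserD_cont hτ hv)
      (by omega) (fun a ha => h1 a (by omega))
      (fun a ha => by
        have := h2 (a + 1) (by omega)
        rw [Function.iterate_succ_apply] at this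
        rwa [show a + (q + 1) = a + 1 + q by ring])
    rw [show n + (p + 1) + q = n + 1 + p + q by ring] at t1
    rw [show n + p + (q + 1) = n + 1 + p + q by ring] at t2
    refine (add_le_add t1 t2).trans (le_of_eq ?_)
    rw [pow_succ]
    ring

theorem moser_chain (k : ℕ) (hk : 1 ≤ k) (j : ℕ) : ∀ {V W : Type} [NormedAddCommGroup V]
    [NormedSpace ℝ V] [FiniteDimensional ℝ V] [NormedAddCommGroup W] [NormedSpace ℝ W]
    [CompleteSpace W] (G : V → W), ContDiff ℝ (⊤ : ℕ∞) G → ∀ R : ℝ≥0,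
    ∃ C : ℝ≥0, ∀ (τ : X → X), Continuous τ → MeasurePreserving τ μ μ →
      ∀ (U : X → V), Continuous U → ∀ E : ℝ≥0∞,
      (∀ i ≤ k, eLpNorm ((moserD τ)^[i] U) (moserP k i) μ ≤ R * E ^ ((i : ℝ) / k)) →
      ∀ i ≤ j, i ≤ k →
        eLpNorm ((moserD τ)^[i] (fun x => G (U x))) (moserP k i) μ ≤ C * E ^ ((i : ℝ) / k) := by
  have hk0 : (0 : ℝ) < k := by exact_mod_cast hk
  induction j with
  | zero =>
    intro V W _ _ _ _ _ _ G hG R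
    obtain ⟨M, hM⟩ := (isCompact_closedBall (0 : V) R).exists_bound_of_continuousOn
      hG.continuous.continuousOn
    refine ⟨M.toNNReal, ?_⟩
    intro τ hτ hm U hU E h i hi hik
    obtain rfl : i = 0 := by omega
    have h0 := h 0 (by omega)
    simp only [Function.iterate_zero, id, moserP_zero k hk, Nat.cast_zero, zero_div,
      ENNReal.rpow_zero, mul_one] at h0 ⊢
    rw [eLpNorm_exponent_top] at h0 ⊢
    refine eLpNormEssSup_le_of_ae_bound ?_
    filter_upwards [ae_le_eLpNormEssSup (f := U) (μ := μ)] with x hx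
    apply hM
    rw [mem_closedBall_zero_iff]
    have := hx.trans h0
    rw [enorm_le_coe] at this
    exact this
  | succ j ih =>
    intro V W _ _ _ _ _ _ G hG R
    obtain ⟨H, hH, hGH⟩ := moser_hadamard G hG
    obtain ⟨C0, hC0⟩ := ih G hG R
    obtain ⟨C1, hC1⟩ := ih H hH (R + R)
    refine ⟨C0 + 2 ^ j * (C1 * R), ?_⟩
    intro τ hτ hm U hU E h i hi hik
    rcases Nat.lt_or_ge i (j + 1) with hij | hij
    · refine (hC0 τ hτ hm U hU E h i (by omega) hik).trans ?_
      gcongr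
      exact_mod_cast le_self_add
    · obtain rfl : i = j + 1 := by omega
      have hpair : ∀ i ≤ k, eLpNorm ((moserD τ)^[i] (fun x => (U x, U (τ x)))) (moserP k i) μ
          ≤ ((R + R : ℝ≥0) : ℝ≥0∞) * E ^ ((i : ℝ) / k) := by
        intro i hi
        rw [moserD_iter_pair]
        have hc := moserD_iter_cont hτ hU i
        have hb : eLpNorm (fun x => ((moserD τ)^[i] U x, (moserD τ)^[i] U (τ x))) (moserP k i) μ
          ≤ eLpNorm (fun x => ‖(moserD τ)^[i] U x‖ + ‖(moserD τ)^[i] U (τ x)‖) (moserP k i) μ := by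
          refine eLpNorm_mono_real fun x => ?_
          rw [Prod.norm_def]
          exact max_le_add_of_nonneg (norm_nonneg _) (norm_nonneg _)
        refine hb.trans ?_
        refine (eLpNorm_add_le (f := fun x => ‖(moserD τ)^[i] U x‖)
          (g := fun x => ‖(moserD τ)^[i] U (τ x)‖) hc.norm.aestronglyMeasurable
          (hc.comp hτ).norm.aestronglyMeasurable (moserP_one_le _ _ hk (by omega))).trans ?_
        rw [eLpNorm_norm, eLpNorm_norm (fun x => (moserD τ)^[i] U (τ x))]
        have h3 := eLpNorm_comp_measurePreserving (p := moserP k i) hc.aestronglyMeasurable hm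
        refine (add_le_add (h i hi) (h3.le.trans (h i hi))).trans (le_of_eq ?_)
        push_cast
        ring
      have hUp : Continuous (fun x => (U x, U (τ x))) := hU.prodMk (hU.comp hτ)
      have e1 : moserD τ (fun x => G (U x)) = fun x => H (U x, U (τ x)) (moserD τ U x) := by
        ext x
        exact hGH _ _
      rw [Function.iterate_succ_apply, e1]
      have := moser_prod μ k hk hτ hm E C1 R j 0 1 (fun x => H (U x, U (τ x))) (moserD τ U)
        (hH.continuous.comp hUp) (moserD_cont hτ hU) (by omega)
        (fun a ha => hC1 τ hτ hm _ hUp E hpair a ha (by omega))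
        (fun a ha => by
          have := h (a + 1) (by omega)
          rwa [Function.iterate_succ_apply] at this)
      simp only [add_zero] at this
      refine this.trans ?_
      push_cast
      gcongr
      exact le_add_self

end chain

/-! ### Discrete Gagliardo-Nirenberg inequality -/

theorem moser_logconv (a : ℕ → ℝ) (ha : ∀ i, 0 ≤ a i) (c : ℝ) (hc : 1 ≤ c) (k : ℕ) (hk : 1 ≤ k)
    (h : ∀ j, j + 1 < k → a (j + 1) ^ 2 ≤ c * (a j * a (j + 2))) (A : ℝ) (hA : 1 ≤ A)
    (h0 : a 0 ≤ A) (i : ℕ) (hi : i ≤ k) :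
    a i ≤ (c ^ (k * k) * A) ^ (k + 1) * (a k) ^ ((i : ℝ) / k) := by
  have hc0 : 0 < c := by linarith
  have s1 : ∀ n, n < k → a n ^ (n + 1) ≤ c ^ (n * n) * (a 0 * a (n + 1) ^ n) := by
    intro n
    induction n with
    | zero => intro _; simp
    | succ n ih =>
      intro hn
      have h1 := ih (by omega)
      have h2 := h n hn
      rcases (ha (n + 1)).eq_or_lt with hz | hz
      · rw [← hz, zero_pow (by omega)]
        have := ha 0
        have := ha (n + 1 + 1)
        positivity
      · have h3 : (a (n + 1) ^ 2) ^ (n + 1) ≤ (c * (a n * a (n + 2))) ^ (n + 1) :=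
          pow_le_pow_left₀ (by positivity) h2 _
        have h4 : (c * (a n * a (n + 2))) ^ (n + 1)
            ≤ c ^ (n + 1) * (c ^ (n * n) * (a 0 * a (n + 1) ^ n) * a (n + 2) ^ (n + 1)) := by
          rw [mul_pow, mul_pow]
          have := ha (n + 2)
          gcongr
        have h5 : a (n + 1) ^ n * a (n + 1) ^ (n + 1 + 1)
            ≤ a (n + 1) ^ n * (c ^ (n + 1 + n * n) * (a 0 * a (n + 2) ^ (n + 1))) := by
          calc _ = (a (n + 1) ^ 2) ^ (n + 1) := by ring
            _ ≤ _ := h3.trans h4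
            _ = _ := by ring
        have h6 := le_of_mul_le_mul_left h5 (by positivity)
        refine h6.trans ?_
        have := ha 0
        have := ha (n + 2)
        have e : c ^ (n + 1 + n * n) ≤ c ^ ((n + 1) * (n + 1)) :=
          pow_le_pow_right₀ hc (by nlinarith)
        gcongr
  set B := c ^ (k * k) * A with hB
  have hB1 : 1 ≤ B := one_le_mul_of_one_le_of_one_le (one_le_pow₀ hc) hA
  have hB0 : 0 < B := by linarith
  have s2 : ∀ n, n < k → a n ^ (n + 1) ≤ B * a (n + 1) ^ n := by
    intro n hn
    refine (s1 n hn).trans ?_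
    rw [hB, mul_assoc]
    have := ha (n + 1)
    have := ha 0
    have e : c ^ (n * n) ≤ c ^ (k * k) := pow_le_pow_right₀ hc (by nlinarith)
    gcongr
  have s3 : ∀ n, n < k → a n ≤ B * a (n + 1) ^ ((n : ℝ) / (n + 1 : ℕ)) := by
    intro n hn
    have h1 := s2 n hn
    have hp : (0 : ℝ) < ((n + 1 : ℕ) : ℝ) := by positivity
    have h2 : (B * a (n + 1) ^ ((n : ℝ) / (n + 1 : ℕ))) ^ (n + 1)
        = B ^ (n + 1) * a (n + 1) ^ n := by
      rw [mul_pow, ← Real.rpow_natCast (a (n + 1) ^ ((n : ℝ) / (n + 1 : ℕ))),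
        ← Real.rpow_mul (ha _), div_mul_cancel₀ _ hp.ne', Real.rpow_natCast]
    refine le_of_pow_le_pow_left₀ (n := n + 1) (by omega)
      (mul_nonneg hB0.le (Real.rpow_nonneg (ha _) _)) ?_
    rw [h2]
    refine h1.trans ?_
    have := ha (n + 1)
    have e : B ≤ B ^ (n + 1) := le_self_pow₀ hB1 (by omega)
    gcongr
  have s4 : ∀ m, i ≤ i + m → i + m ≤ k → 1 ≤ i + m →
      a i ≤ B ^ (m + 1) * a (i + m) ^ ((i : ℝ) / ((i + m : ℕ) : ℝ)) := by
    intro m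
    induction m with
    | zero =>
      intro _ h1 h2
      have : (i : ℝ) ≠ 0 := by positivity
      simp only [add_zero, zero_add, pow_one]
      rw [div_self this, Real.rpow_one]
      nlinarith [ha i]
    | succ m ih =>
      intro _ h1 h2
      rcases Nat.eq_zero_or_pos (i + m) with hz | hz
      · obtain ⟨rfl, rfl⟩ : i = 0 ∧ m = 0 := by omega
        simp only [Nat.cast_zero, zero_div, Real.rpow_zero, mul_one]
        have e1 : A ≤ B := by
          rw [hB]; exact le_mul_of_one_le_left (by linarith) (one_le_pow₀ hc)
        have e : B ≤ B ^ (0 + 1 + 1) := le_self_pow₀ hB1 (by omega)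
        linarith
      · have h3 := ih (by omega) (by omega) hz
        have h4 := s3 (i + m) (by omega)
        refine h3.trans ?_
        have hp : (0 : ℝ) < ((i + m : ℕ) : ℝ) := by positivity
        have hp' : (0 : ℝ) < ((i + m + 1 : ℕ) : ℝ) := by positivity
        have hq : (i : ℝ) / ((i + m : ℕ) : ℝ) ≤ 1 := by
          rw [div_le_one hp]; push_cast; linarith [(Nat.cast_nonneg m : (0:ℝ) ≤ m)]
        have h5 : a (i + m) ^ ((i : ℝ) / ((i + m : ℕ) : ℝ))
            ≤ B * a (i + m + 1) ^ ((i : ℝ) / ((i + m + 1 : ℕ) : ℝ)) := by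
          calc _ ≤ (B * a (i + m + 1) ^ (((i + m : ℕ) : ℝ) / (i + m + 1 : ℕ)))
                ^ ((i : ℝ) / ((i + m : ℕ) : ℝ)) :=
                Real.rpow_le_rpow (ha _) h4 (by positivity)
            _ = B ^ ((i : ℝ) / ((i + m : ℕ) : ℝ))
                * a (i + m + 1) ^ ((i : ℝ) / ((i + m + 1 : ℕ) : ℝ)) := by
                rw [Real.mul_rpow hB0.le (Real.rpow_nonneg (ha _) _), ← Real.rpow_mul (ha _)]
                congr 2
                field_simp
            _ ≤ _ := by
                have := Real.rpow_nonneg (ha (i + m + 1)) ((i : ℝ) / ((i + m + 1 : ℕ) : ℝ))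
                gcongr
                calc _ ≤ B ^ (1 : ℝ) := Real.rpow_le_rpow_of_exponent_le hB1 hq
                  _ = B := Real.rpow_one B
        calc _ ≤ B ^ (m + 1) * (B * a (i + m + 1) ^ ((i : ℝ) / ((i + m + 1 : ℕ) : ℝ))) := by
              gcongr
          _ = _ := by rw [← mul_assoc, ← pow_succ]; rfl
  have h7 := s4 (k - i) (by omega) (by omega) (by omega)
  rw [Nat.add_sub_cancel' hi] at h7
  refine h7.trans ?_
  have := Real.rpow_nonneg (ha k) ((i : ℝ) / k)
  have e : B ^ (k - i + 1) ≤ B ^ (k + 1) := pow_le_pow_right₀ hB1 (by omega)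
  gcongr

theorem moser_pow_diff (a b : ℂ) (q : ℝ) (hq : 0 ≤ q) :
    ‖((‖a‖ ^ q : ℝ) : ℂ) * a - ((‖b‖ ^ q : ℝ) : ℂ) * b‖
      ≤ (2 + q) * (‖a - b‖ * (‖a‖ ^ q + ‖b‖ ^ q)) := by
  have key : ∀ a b : ℂ, ‖b‖ ≤ ‖a‖ →
      ‖((‖a‖ ^ q : ℝ) : ℂ) * a - ((‖b‖ ^ q : ℝ) : ℂ) * b‖
      ≤ (2 + q) * (‖a - b‖ * (‖a‖ ^ q + ‖b‖ ^ q)) := by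
    intro a b hab
    have hx := norm_nonneg a
    have hy := norm_nonneg b
    have hxq : 0 ≤ ‖a‖ ^ q := Real.rpow_nonneg hx q
    have hyq : 0 ≤ ‖b‖ ^ q := Real.rpow_nonneg hy q
    have hmono : ‖b‖ ^ q ≤ ‖a‖ ^ q := Real.rpow_le_rpow hy hab hq
    have hsc : (‖a‖ ^ q - ‖b‖ ^ q) * ‖b‖ ≤ (1 + q) * ((‖a‖ - ‖b‖) * ‖a‖ ^ q) := by
      rcases hx.eq_or_lt with h0 | h0
      · have : ‖b‖ = 0 := le_antisymm (hab.trans h0.symm.le) hy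
        rw [this, ← h0]; simp
      · obtain ⟨r, hr⟩ : ∃ r, r = ‖b‖ / ‖a‖ := ⟨_, rfl⟩
        have hb : ‖b‖ = r * ‖a‖ := by rw [hr]; field_simp
        have hr0 : 0 ≤ r := by rw [hr]; positivity
        have hr1 : r ≤ 1 := by rw [hr]; exact (div_le_one h0).2 hab
        have hbr : ‖b‖ ^ q = r ^ q * ‖a‖ ^ q := by rw [hb, Real.mul_rpow hr0 hx]
        have hs : 1 - r ^ q ≤ (1 + q) * (1 - r) := by
          rcases le_total q 1 with h1 | h1
          · have : r ≤ r ^ q := by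
              calc r = r ^ (1 : ℝ) := (Real.rpow_one r).symm
                _ ≤ r ^ q := Real.rpow_le_rpow_of_exponent_ge' hr0 hr1 hq h1
            nlinarith
          · have := one_add_mul_self_le_rpow_one_add (s := r - 1) (by linarith) h1
            rw [show 1 + (r - 1) = r by ring] at this
            nlinarith
        rw [hbr, hb]
        have h2 : (1 - r ^ q) * r ≤ (1 + q) * (1 - r) := by
          have : 0 ≤ (1 + q) * (1 - r) := mul_nonneg (by linarith) (by linarith)
          have h3 : (1 - r ^ q) * r ≤ ((1 + q) * (1 - r)) * r := by gcongr
          nlinarith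
        have : 0 ≤ ‖a‖ ^ q * ‖a‖ := by positivity
        nlinarith [mul_le_mul_of_nonneg_right h2 this]
    have hd : ‖a‖ - ‖b‖ ≤ ‖a - b‖ := norm_sub_norm_le a b
    have e : ((‖a‖ ^ q : ℝ) : ℂ) * a - ((‖b‖ ^ q : ℝ) : ℂ) * b
        = ((‖a‖ ^ q : ℝ) : ℂ) * (a - b) + ((‖a‖ ^ q - ‖b‖ ^ q : ℝ) : ℂ) * b := by
      push_cast; ring
    rw [e]
    refine (norm_add_le _ _).trans ?_
    rw [norm_mul, norm_mul, Complex.norm_real, Complex.norm_real, Real.norm_of_nonneg hxq,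
      Real.norm_of_nonneg (by linarith)]
    have h4 : (1 + q) * ((‖a‖ - ‖b‖) * ‖a‖ ^ q) ≤ (1 + q) * (‖a - b‖ * ‖a‖ ^ q) := by gcongr
    have h5 : 0 ≤ (2 + q) * (‖a - b‖ * ‖b‖ ^ q) := by positivity
    nlinarith
  rcases le_total ‖b‖ ‖a‖ with h | h
  · exact key a b h
  · have := key b a h
    rw [norm_sub_rev, norm_sub_rev a b, add_comm (‖a‖ ^ q)]
    exact this

section gn

variable {X : Type} [TopologicalSpace X] [CompactSpace X] [SecondCountableTopology X]
  [MeasurableSpace X] [BorelSpace X] (μ : Measure X) [IsProbabilityMeasure μ]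

theorem moser_lp_fin {V : Type} [NormedAddCommGroup V] {f : X → V} (hf : Continuous f)
    (p : ℝ≥0∞) : eLpNorm f p μ ≠ ⊤ := by
  obtain ⟨C, hC⟩ := isCompact_univ.exists_bound_of_continuousOn hf.continuousOn
  exact (MemLp.of_bound (p := p) hf.aestronglyMeasurable C
    (Filter.Eventually.of_forall fun x => hC x (Set.mem_univ x))).2.ne

theorem moser_cont_int {V : Type} [NormedAddCommGroup V] {f : X → V} (hf : Continuous f) :
    Integrable f μ :=
  memLp_one_iff_integrable.1 ⟨hf.aestronglyMeasurable, (moser_lp_fin μ hf 1).lt_top⟩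

theorem moser_gn_parts {τ : X → X} (hτ : Continuous τ) (hm : MeasurePreserving τ μ μ)
    {v : X → ℂ} (hv : Continuous v) (q : ℝ) (hq : 0 ≤ q) :
    ∫ x, ‖moserD τ v x‖ ^ (q + 2) ∂μ ≤
      ∫ x, (2 + q) * ((‖moserD τ (moserD τ v) x‖ * ‖v (τ x)‖) *
        (‖moserD τ v (τ x)‖ ^ q + ‖moserD τ v x‖ ^ q)) ∂μ := by
  set d := moserD τ v with hd
  have hdc : Continuous d := moserD_cont hτ hv
  have hddc : Continuous (moserD τ d) := moserD_cont hτ hdc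
  set w : X → ℂ := fun x => ((‖d x‖ ^ q : ℝ) : ℂ) * d x with hw
  have hwc : Continuous w :=
    (Complex.continuous_ofReal.comp (hdc.norm.rpow_const fun _ => Or.inr hq)).mul hdc
  let F : X → ℝ := fun x => (starRingEnd ℂ (w x) * v x).re
  have hF : Continuous F :=
    Complex.continuous_re.comp ((Complex.continuous_conj.comp hwc).mul hv)
  let F2 : X → ℝ := fun x => (starRingEnd ℂ (w x) * v (τ x)).re
  have hF2 : Continuous F2 :=
    Complex.continuous_re.comp ((Complex.continuous_conj.comp hwc).mul (hv.comp hτ))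
  have e1 : ∀ x, ‖d x‖ ^ (q + 2) = F2 x - F x := by
    intro x
    have : F2 x - F x = (starRingEnd ℂ (w x) * d x).re := by
      simp only [F, F2, hd, moserD, mul_sub, Complex.sub_re]
    rw [this, hw]
    simp only [map_mul, Complex.conj_ofReal]
    rw [mul_assoc, ← Complex.normSq_eq_conj_mul_self, ← Complex.ofReal_mul, Complex.ofReal_re,
      Complex.normSq_eq_norm_sq, Real.rpow_add_of_nonneg (norm_nonneg _) hq (by norm_num)]
    norm_num
  have e2 : ∫ x, F (τ x) ∂μ = ∫ x, F x ∂μ := by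
    have h1 := integral_map (μ := μ) hm.measurable.aemeasurable
      (f := F) (by rw [hm.map_eq]; exact hF.aestronglyMeasurable)
    rw [hm.map_eq] at h1
    exact h1.symm
  have hFτ : Continuous (fun x => F (τ x)) := hF.comp hτ
  calc ∫ x, ‖d x‖ ^ (q + 2) ∂μ = ∫ x, (F2 x - F x) ∂μ := by simp_rw [e1]
    _ = ∫ x, F2 x ∂μ - ∫ x, F (τ x) ∂μ := by
      rw [e2, integral_sub (moser_cont_int μ hF2) (moser_cont_int μ hF)]
    _ = ∫ x, (F2 x - F (τ x)) ∂μ := by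
      rw [integral_sub (moser_cont_int μ hF2) (moser_cont_int μ hFτ)]
    _ ≤ _ := by
      refine integral_mono (moser_cont_int μ (hF2.sub hFτ)) (moser_cont_int μ ?_) ?_
      · have h1 : Continuous fun x => ‖d x‖ ^ q := hdc.norm.rpow_const fun _ => Or.inr hq
        have h2 : Continuous fun x => ‖d (τ x)‖ ^ q := h1.comp hτ
        exact continuous_const.mul ((hddc.norm.mul (hv.comp hτ).norm).mul (h2.add h1))
      · intro x
        have e3 : F2 x - F (τ x) = (starRingEnd ℂ (w x - w (τ x)) * v (τ x)).re := by
          simp only [F, F2, map_sub, sub_mul, Complex.sub_re]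
        show F2 x - F (τ x) ≤ _
        rw [e3]
        refine (Complex.re_le_norm _).trans ?_
        rw [norm_mul, RCLike.norm_conj, norm_sub_rev]
        have h1 := moser_pow_diff (d (τ x)) (d x) q hq
        calc _ ≤ ((2 + q) * (‖d (τ x) - d x‖ * (‖d (τ x)‖ ^ q + ‖d x‖ ^ q))) * ‖v (τ x)‖ := by
              gcongr
          _ = _ := by simp only [moserD]; ring

end gn

theorem moserP_inv_real (k m : ℕ) (hk : 1 ≤ k) :
    (moserP k m)⁻¹ = ENNReal.ofReal ((m : ℝ) / (2 * k)) := by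
  have hk0 : (0 : ℝ) < k := by exact_mod_cast hk
  rw [moserP_inv _ _ hk, ENNReal.ofReal_div_of_pos (by positivity), ENNReal.ofReal_natCast,
    ENNReal.ofReal_mul (by norm_num), ENNReal.ofReal_natCast]
  norm_num

section gn2

variable {X : Type} [TopologicalSpace X] [CompactSpace X] [SecondCountableTopology X]
  [MeasurableSpace X] [BorelSpace X] (μ : Measure X) [IsProbabilityMeasure μ]

theorem moser_gn_step (k : ℕ) (j : ℕ) (hj : j + 1 < k) {τ : X → X} (hτ : Continuous τ)
    (hm : MeasurePreserving τ μ μ) {v : X → ℂ} (hv : Continuous v) :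
    (eLpNorm (moserD τ v) (moserP k (j + 1)) μ) ^ 2 ≤ ENNReal.ofReal (4 * k + 4) *
      (eLpNorm v (moserP k j) μ * eLpNorm (moserD τ (moserD τ v)) (moserP k (j + 2)) μ) := by
  have hk : 1 ≤ k := by omega
  have hk0 : (0 : ℝ) < k := by exact_mod_cast hk
  have hj0 : (0 : ℝ) < j + 1 := by positivity
  have hjk : (j : ℝ) + 1 < k := by exact_mod_cast hj
  obtain ⟨p, hp⟩ : ∃ p : ℝ, p = 2 * k / (j + 1) := ⟨_, rfl⟩
  have hp2 : 2 < p := by rw [hp, lt_div_iff₀ hj0]; linarith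
  have hp2k : p ≤ 2 * k := by
    rw [hp, div_le_iff₀ hj0]
    nlinarith [(Nat.cast_nonneg j : (0:ℝ) ≤ j)]
  obtain ⟨q, hq⟩ : ∃ q : ℝ, q = p - 2 := ⟨_, rfl⟩
  have hq0 : 0 < q := by linarith
  have hpq : q + 2 = p := by linarith
  have hP : moserP k (j + 1) = ENNReal.ofReal p := by
    rw [← inv_inv (moserP k (j + 1)), moserP_inv_real _ _ hk,
      ← ENNReal.ofReal_inv_of_pos (by positivity), hp]
    congr 1
    push_cast
    rw [inv_div]
  set d := moserD τ v with hd
  have hdc : Continuous d := moserD_cont hτ hv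
  have hddc : Continuous (moserD τ d) := moserD_cont hτ hdc
  set N := eLpNorm d (moserP k (j + 1)) μ with hN
  have hNfin : N ≠ ⊤ := moser_lp_fin μ hdc _
  have hqc : Continuous fun x => ‖d x‖ ^ q := hdc.norm.rpow_const fun _ => Or.inr hq0.le
  have hqcτ : Continuous fun x => ‖d (τ x)‖ ^ q := hqc.comp hτ
  -- the left side
  have hNp : N ^ p = ENNReal.ofReal (∫ x, ‖d x‖ ^ p ∂μ) := by
    have hmem : MemLp d (ENNReal.ofReal p) μ := ⟨hdc.aestronglyMeasurable,
      (moser_lp_fin μ hdc _).lt_top⟩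
    rw [hN, hP, hmem.eLpNorm_eq_integral_rpow_norm (by simp; linarith) ENNReal.ofReal_ne_top,
      ENNReal.toReal_ofReal (by linarith), ENNReal.ofReal_rpow_of_nonneg
      (by positivity) (by linarith), ← Real.rpow_mul (by positivity),
      inv_mul_cancel₀ (by linarith), Real.rpow_one]
  -- Hölder
  let A : X → ℝ := fun x => ‖moserD τ d x‖ * ‖v (τ x)‖
  let B : X → ℝ := fun x => ‖d (τ x)‖ ^ q + ‖d x‖ ^ q
  have hAc : Continuous A := hddc.norm.mul (hv.comp hτ).norm
  have hBc : Continuous B := hqcτ.add hqc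
  let r : ℝ≥0∞ := ENNReal.ofReal (p / q)
  have hr1 : 1 ≤ r := by
    rw [← ENNReal.ofReal_one]
    apply ENNReal.ofReal_le_ofReal
    rw [le_div_iff₀ hq0]; linarith
  have hol1 : ENNReal.HolderTriple (moserP k (2 * j + 2)) r 1 := by
    constructor
    rw [moserP_inv_real _ _ hk, ← ENNReal.ofReal_inv_of_pos (div_pos (by linarith) hq0),
      ← ENNReal.ofReal_add (by positivity) (by rw [inv_div]; positivity), inv_one,
      ← ENNReal.ofReal_one]
    congr 1
    rw [inv_div, hq, hp]
    push_cast
    field_simp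
    ring
  have hol2 : ENNReal.HolderTriple (moserP k (j + 2)) (moserP k j) (moserP k (2 * j + 2)) := by
    have := moserP_holder k (j + 2) j hk
    rwa [show j + 2 + j = 2 * j + 2 by ring] at this
  have hb1 := eLpNorm_le_eLpNorm_mul_eLpNorm_of_nnnorm (μ := μ) (p := moserP k (2 * j + 2))
      (q := r) (r := 1) hAc.aestronglyMeasurable hBc.aestronglyMeasurable
      (fun a b : ℝ => (2 + q) * (a * b)) (Real.toNNReal (2 + q))
      (Filter.Eventually.of_forall fun x => by
        rw [nnnorm_mul, nnnorm_mul, mul_assoc, Real.nnnorm_of_nonneg (by linarith : 0 ≤ 2 + q)]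
        gcongr
        rw [← NNReal.coe_le_coe]
        simp)
  have hb2 : eLpNorm A (moserP k (2 * j + 2)) μ
      ≤ eLpNorm (moserD τ d) (moserP k (j + 2)) μ * eLpNorm v (moserP k j) μ := by
    have h1 := eLpNorm_le_eLpNorm_mul_eLpNorm_of_nnnorm (μ := μ) (p := moserP k (j + 2))
      (q := moserP k j) (r := moserP k (2 * j + 2)) hddc.aestronglyMeasurable
      (hv.comp hτ).aestronglyMeasurable
      (fun a b : ℂ => ‖a‖ * ‖b‖) 1
      (Filter.Eventually.of_forall fun x => by simp)
    rw [ENNReal.coe_one, one_mul, eLpNorm_comp_measurePreserving hv.aestronglyMeasurable hm] at h1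
    exact h1
  have hN' : ∀ f : X → ℂ, eLpNorm (fun x => ‖f x‖ ^ q) r μ = eLpNorm f (moserP k (j + 1)) μ ^ q := by
    intro f
    rw [eLpNorm_norm_rpow f hq0, hP, ← ENNReal.ofReal_mul (div_pos (by linarith) hq0).le,
      div_mul_cancel₀ _ hq0.ne']
  have hb3 : eLpNorm B r μ ≤ 2 * N ^ q := by
    refine (eLpNorm_add_le (f := fun x => ‖d (τ x)‖ ^ q) (g := fun x => ‖d x‖ ^ q)
      hqcτ.aestronglyMeasurable hqc.aestronglyMeasurable hr1).trans ?_
    rw [hN' d, hN' (fun x => d (τ x))]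
    have h3 := eLpNorm_comp_measurePreserving (p := moserP k (j + 1)) hdc.aestronglyMeasurable hm
    have h4 : eLpNorm (fun x => d (τ x)) (moserP k (j + 1)) μ = N := h3
    rw [h4, two_mul]
  have hparts := moser_gn_parts μ hτ hm hv q hq0.le
  rw [hpq] at hparts
  have hΦ : Continuous fun x => (2 + q) * (A x * B x) := continuous_const.mul (hAc.mul hBc)
  have hmain : N ^ p ≤ eLpNorm (fun x => (2 + q) * (A x * B x)) 1 μ := by
    rw [hNp, eLpNorm_one_eq_lintegral_enorm,
      ← ofReal_integral_norm_eq_lintegral_enorm (moser_cont_int μ hΦ)]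
    apply ENNReal.ofReal_le_ofReal
    refine hparts.trans ?_
    refine integral_mono (moser_cont_int μ hΦ) (moser_cont_int μ hΦ).norm fun x => ?_
    exact Real.le_norm_self _
  set M := eLpNorm v (moserP k j) μ * eLpNorm (moserD τ d) (moserP k (j + 2)) μ with hM
  have htot : N ^ p ≤ (ENNReal.ofReal (4 * k + 4) * M) * N ^ q := by
    calc N ^ p ≤ _ := hmain
      _ ≤ _ := hb1
      _ ≤ ENNReal.ofReal (2 + q) * (eLpNorm (moserD τ d) (moserP k (j + 2)) μ
            * eLpNorm v (moserP k j) μ) * (2 * N ^ q) := by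
          gcongr
          exact le_rfl
      _ = (ENNReal.ofReal (2 + q) * 2) * M * N ^ q := by rw [hM]; ring
      _ ≤ _ := by
          gcongr
          rw [show (2 : ℝ≥0∞) = ENNReal.ofReal 2 by simp, ← ENNReal.ofReal_mul (by linarith)]
          apply ENNReal.ofReal_le_ofReal
          linarith
  rcases eq_or_ne N 0 with h0 | h0
  · rw [h0]; simp
  · have hqq : N ^ p = N ^ 2 * N ^ q := by
      rw [← hpq, ENNReal.rpow_add _ _ h0 hNfin, mul_comm]
      norm_num
    rw [hqq] at htot
    have hne : N ^ q ≠ 0 := by simp [ENNReal.rpow_eq_zero_iff, h0, hNfin]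
    have hnt : N ^ q ≠ ⊤ := ENNReal.rpow_ne_top_of_nonneg hq0.le hNfin
    exact (ENNReal.mul_le_mul_iff_left hne hnt).1 htot

theorem moser_gn (k : ℕ) (hk : 1 ≤ k) (R : ℝ≥0) : ∃ K : ℝ≥0, ∀ (τ : X → X), Continuous τ →
    MeasurePreserving τ μ μ → ∀ (u : X → ℂ), Continuous u → (∀ x, ‖u x‖ ≤ R) →
    ∀ i ≤ k, eLpNorm ((moserD τ)^[i] u) (moserP k i) μ
      ≤ K * (eLpNorm ((moserD τ)^[k] u) 2 μ) ^ ((i : ℝ) / k) := by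
  refine ⟨Real.toNNReal (((4 * k + 4 : ℝ) ^ (k * k) * (1 + R)) ^ (k + 1)), ?_⟩
  intro τ hτ hm u hu hR i hi
  have hfin : ∀ i, eLpNorm ((moserD τ)^[i] u) (moserP k i) μ ≠ ⊤ := fun i =>
    moser_lp_fin μ (moserD_iter_cont hτ hu i) _
  have h := moser_logconv (fun i => (eLpNorm ((moserD τ)^[i] u) (moserP k i) μ).toReal)
    (fun i => ENNReal.toReal_nonneg) (4 * k + 4) (by linarith [(Nat.cast_nonneg k : (0:ℝ) ≤ k)]) k hk
    (by
      intro j hj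
      have h1 := moser_gn_step μ k j hj hτ hm (moserD_iter_cont hτ hu j)
      simp only [← Function.iterate_succ_apply' (moserD τ)] at h1
      have h2 := ENNReal.toReal_mono (ENNReal.mul_ne_top ENNReal.ofReal_ne_top
        (ENNReal.mul_ne_top (hfin j) (hfin (j + 2)))) h1
      rw [ENNReal.toReal_pow, ENNReal.toReal_mul, ENNReal.toReal_mul,
        ENNReal.toReal_ofReal (by positivity)] at h2
      exact h2) (1 + R) (by simp) (by
        have : eLpNorm u ⊤ μ ≤ ENNReal.ofReal R := by
          rw [eLpNorm_exponent_top]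
          exact eLpNormEssSup_le_of_ae_bound (Filter.Eventually.of_forall hR)
        simp only [Function.iterate_zero, id, moserP_zero k hk]
        have h2 := ENNReal.toReal_mono ENNReal.ofReal_ne_top this
        rw [ENNReal.toReal_ofReal (NNReal.coe_nonneg R)] at h2
        linarith) i hi
  simp only [moserP_self k hk] at h
  rw [← ENNReal.ofReal_toReal (hfin i)]
  refine (ENNReal.ofReal_le_ofReal h).trans (le_of_eq ?_)
  have hf2 : eLpNorm ((moserD τ)^[k] u) 2 μ ≠ ⊤ := moser_lp_fin μ (moserD_iter_cont hτ hu k) _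
  rw [ENNReal.ofReal_mul (by positivity), ← ENNReal.ofReal_rpow_of_nonneg ENNReal.toReal_nonneg
    (by positivity), ENNReal.ofReal_toReal hf2]
  rfl

/-- The key estimate: at every scale, differences of `G ∘ u` are controlled by those of `u`. -/
theorem moser_diff (k : ℕ) (hk : 1 ≤ k) (G : ℂ → ℂ) (hG : ContDiff ℝ (⊤ : ℕ∞) G) (R : ℝ≥0) :
    ∃ C : ℝ≥0, ∀ (τ : X → X), Continuous τ → MeasurePreserving τ μ μ →
      ∀ (u : X → ℂ), Continuous u → (∀ x, ‖u x‖ ≤ R) →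
      eLpNorm ((moserD τ)^[k] (fun x => G (u x))) 2 μ ≤ C * eLpNorm ((moserD τ)^[k] u) 2 μ := by
  obtain ⟨K, hK⟩ := moser_gn μ k hk R
  obtain ⟨C, hC⟩ := moser_chain μ k hk k G hG K
  refine ⟨C, fun τ hτ hm u hu hR => ?_⟩
  have h := hC τ hτ hm u hu _ (hK τ hτ hm u hu hR) k le_rfl le_rfl
  have hk0 : (k : ℝ) ≠ 0 := by positivity
  rwa [moserP_self k hk, div_self hk0, ENNReal.rpow_one] at h

end gn2

/-! ### Dyadic characterization of the Sobolev weight -/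

noncomputable def moserM (n : ℕ) (l : ℤ) : ℝ :=
  ‖Complex.exp ((π * l / 2 ^ n : ℝ) * Complex.I) - 1‖

theorem moserM_le_two (n : ℕ) (l : ℤ) : moserM n l ≤ 2 := by
  unfold moserM
  refine (norm_sub_le _ _).trans ?_
  rw [Complex.norm_exp_ofReal_mul_I, norm_one]
  norm_num

theorem moserM_le (n : ℕ) (l : ℤ) : moserM n l ≤ π * |(l : ℝ)| / 2 ^ n := by
  unfold moserM
  have := Real.norm_exp_I_mul_ofReal_sub_one_le (x := π * l / 2 ^ n)
  rw [mul_comm Complex.I] at this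
  refine this.trans (le_of_eq ?_)
  rw [Real.norm_eq_abs, abs_div, abs_mul, abs_of_pos Real.pi_pos, abs_of_pos (by positivity : (0:ℝ) < 2 ^ n)]

theorem moserM_zero (n : ℕ) : moserM n 0 = 0 := by simp [moserM]

theorem moser_log (l : ℤ) (hl : l ≠ 0) :
    ∃ N : ℕ, (2 : ℝ) ^ N ≤ |(l : ℝ)| ∧ |(l : ℝ)| < 2 ^ (N + 1) := by
  refine ⟨Nat.log 2 l.natAbs, ?_, ?_⟩
  · have := Nat.pow_log_le_self 2 (Int.natAbs_ne_zero.2 hl)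
    have h2 : ((2 ^ Nat.log 2 l.natAbs : ℕ) : ℝ) ≤ (l.natAbs : ℝ) := by exact_mod_cast this
    rw [Nat.cast_natAbs, Int.cast_abs] at h2
    exact_mod_cast h2
  · have := Nat.lt_pow_succ_log_self (b := 2) (by norm_num) l.natAbs
    have h2 : (l.natAbs : ℝ) < ((2 ^ (Nat.log 2 l.natAbs + 1) : ℕ) : ℝ) := by exact_mod_cast this
    rw [Nat.cast_natAbs, Int.cast_abs] at h2
    exact_mod_cast h2

theorem moserM_lower (l : ℤ) (hl : l ≠ 0) : ∃ n : ℕ, 1 ≤ moserM n l ∧ |(l : ℝ)| ≤ 2 ^ n := by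
  obtain ⟨N, h1, h2⟩ := moser_log l hl
  refine ⟨N + 1, ?_, h2.le⟩
  have hre : |(Complex.exp ((π * l / 2 ^ (N + 1) : ℝ) * Complex.I) - 1).re| ≤ moserM (N + 1) l :=
    Complex.abs_re_le_norm _
  refine le_trans ?_ hre
  rw [Complex.sub_re, Complex.exp_ofReal_mul_I_re, Complex.one_re, ← Real.cos_abs, abs_div, abs_mul,
    abs_of_pos Real.pi_pos, abs_of_pos (by positivity : (0:ℝ) < 2 ^ (N + 1))]
  have hp := Real.pi_pos
  have h3 : π / 2 ≤ π * |(l : ℝ)| / 2 ^ (N + 1) := by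
    rw [le_div_iff₀ (by positivity), pow_succ]
    nlinarith
  have h4 : π * |(l : ℝ)| / 2 ^ (N + 1) ≤ π := by
    rw [div_le_iff₀ (by positivity)]
    nlinarith
  have := Real.cos_nonpos_of_pi_div_two_le_of_le h3 (by linarith)
  rw [abs_of_nonpos (by linarith)]
  linarith

theorem moser_upper (s : ℝ) (hs : 0 < s) (k : ℕ) (hk : s < k) : ∃ C : ℝ≥0, ∀ l : ℤ, l ≠ 0 →
    ∑' n : ℕ, ENNReal.ofReal (((2 : ℝ) ^ n) ^ (2 * s) * moserM n l ^ (2 * k))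
      ≤ C * ENNReal.ofReal (|(l : ℝ)| ^ (2 * s)) := by
  obtain ⟨a, ha⟩ : ∃ a : ℝ, a = 2 ^ (-(2 * s)) := ⟨_, rfl⟩
  obtain ⟨b, hb⟩ : ∃ b : ℝ, b = 2 ^ (-(2 * (k - s))) := ⟨_, rfl⟩
  have ha0 : 0 < a := by rw [ha]; positivity
  have hb0 : 0 < b := by rw [hb]; positivity
  have ha1 : a < 1 := by
    rw [ha]; exact Real.rpow_lt_one_of_one_lt_of_neg (by norm_num) (by linarith)
  have hb1 : b < 1 := by
    rw [hb]; exact Real.rpow_lt_one_of_one_lt_of_neg (by norm_num) (by linarith)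
  have hsa : Summable fun j : ℕ => a ^ j := summable_geometric_of_lt_one ha0.le ha1
  have hsb : Summable fun j : ℕ => b ^ j := summable_geometric_of_lt_one hb0.le hb1
  refine ⟨Real.toNNReal (4 ^ k * (∑' j : ℕ, a ^ j) + π ^ (2 * k) * ∑' j : ℕ, b ^ j), ?_⟩
  intro l hl
  obtain ⟨N, h1, h2⟩ := moser_log l hl
  have hL : 0 < |(l : ℝ)| := by positivity
  set L := |(l : ℝ)| with hLdef
  have hm0 : ∀ n, 0 ≤ moserM n l := fun n => norm_nonneg _
  have low : ∀ j ≤ N, ((2 : ℝ) ^ (N - j)) ^ (2 * s) * moserM (N - j) l ^ (2 * k)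
      ≤ L ^ (2 * s) * 4 ^ k * a ^ j := by
    intro j hj
    have e1 : ((2 : ℝ) ^ (N - j)) ^ (2 * s) = ((2 : ℝ) ^ N) ^ (2 * s) * a ^ j := by
      rw [ha, ← Real.rpow_natCast, ← Real.rpow_natCast, ← Real.rpow_natCast, ← Real.rpow_mul (by norm_num),
        ← Real.rpow_mul (by norm_num), ← Real.rpow_mul (by norm_num), ← Real.rpow_add (by norm_num)]
      congr 1
      push_cast [Nat.cast_sub hj]
      ring
    have e2 : moserM (N - j) l ^ (2 * k) ≤ 4 ^ k := by
      calc _ ≤ (2 : ℝ) ^ (2 * k) := pow_le_pow_left₀ (hm0 _) (moserM_le_two _ _) _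
        _ = 4 ^ k := by rw [pow_mul]; norm_num
    have e3 : ((2 : ℝ) ^ N) ^ (2 * s) ≤ L ^ (2 * s) :=
      Real.rpow_le_rpow (by positivity) h1 (by linarith)
    rw [e1]
    have := pow_nonneg (hm0 (N - j)) (2 * k)
    calc _ ≤ (L ^ (2 * s) * a ^ j) * 4 ^ k := by gcongr
      _ = _ := by ring
  have high : ∀ j, ((2 : ℝ) ^ (j + (N + 1))) ^ (2 * s) * moserM (j + (N + 1)) l ^ (2 * k)
      ≤ L ^ (2 * s) * π ^ (2 * k) * b ^ j := by
    intro j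
    have e2 : moserM (j + (N + 1)) l ^ (2 * k) ≤ (π * L / 2 ^ (j + (N + 1))) ^ (2 * k) :=
      pow_le_pow_left₀ (hm0 _) (moserM_le _ _) _
    have e4 : L ^ (2 * (k - s)) ≤ ((2 : ℝ) ^ (N + 1)) ^ (2 * (k - s)) :=
      Real.rpow_le_rpow hL.le h2.le (by linarith)
    have e5 : ((2 : ℝ) ^ (N + 1)) ^ (2 * (k - s))
        * (((2 : ℝ) ^ (j + (N + 1))) ^ (2 * s) / (2 ^ (j + (N + 1))) ^ (2 * k)) = b ^ j := by
      rw [hb, ← Real.rpow_natCast 2 (N + 1), ← Real.rpow_natCast 2 (j + (N + 1)),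
        ← Real.rpow_natCast _ (2 * k),
        ← Real.rpow_natCast _ j, ← Real.rpow_mul (by norm_num),
        ← Real.rpow_mul (by norm_num), ← Real.rpow_mul (by norm_num), ← Real.rpow_mul (by norm_num),
        ← Real.rpow_sub (by norm_num),
        ← Real.rpow_add (by norm_num)]
      congr 1
      push_cast
      ring
    have e6 : L ^ (2 * k) = L ^ (2 * s) * L ^ (2 * (k - s)) := by
      rw [← Real.rpow_natCast, ← Real.rpow_add hL]
      congr 1
      push_cast
      ring
    calc _ ≤ ((2 : ℝ) ^ (j + (N + 1))) ^ (2 * s) * (π * L / 2 ^ (j + (N + 1))) ^ (2 * k) := by gcongr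
      _ = L ^ (2 * s) * π ^ (2 * k) * (L ^ (2 * (k - s))
          * (((2 : ℝ) ^ (j + (N + 1))) ^ (2 * s) / (2 ^ (j + (N + 1))) ^ (2 * k))) := by
          rw [div_pow, mul_pow, e6]; ring
      _ ≤ L ^ (2 * s) * π ^ (2 * k) * (((2 : ℝ) ^ (N + 1)) ^ (2 * (k - s))
          * (((2 : ℝ) ^ (j + (N + 1))) ^ (2 * s) / (2 ^ (j + (N + 1))) ^ (2 * k))) := by gcongr
      _ = _ := by rw [e5]
  rw [← ENNReal.summable.sum_add_tsum_nat_add' (k := N + 1)]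
  have b1 : ∑ n ∈ Finset.range (N + 1),
      ENNReal.ofReal (((2 : ℝ) ^ n) ^ (2 * s) * moserM n l ^ (2 * k))
      ≤ ENNReal.ofReal (L ^ (2 * s) * 4 ^ k * ∑' j : ℕ, a ^ j) := by
    rw [← Finset.sum_range_reflect, ← ENNReal.ofReal_sum_of_nonneg]
    · apply ENNReal.ofReal_le_ofReal
      calc _ ≤ ∑ j ∈ Finset.range (N + 1), L ^ (2 * s) * 4 ^ k * a ^ j := by
            refine Finset.sum_le_sum fun j hj => ?_
            rw [Finset.mem_range] at hj
            have := low j (by omega)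
            simpa using this
        _ = L ^ (2 * s) * 4 ^ k * ∑ j ∈ Finset.range (N + 1), a ^ j := by rw [Finset.mul_sum]
        _ ≤ _ := by
            gcongr
            exact hsa.sum_le_tsum _ fun j _ => by positivity
    · intro i _
      have := hm0 (N + 1 - 1 - i)
      positivity
  have b2 : ∑' n : ℕ, ENNReal.ofReal (((2 : ℝ) ^ (n + (N + 1))) ^ (2 * s)
      * moserM (n + (N + 1)) l ^ (2 * k)) ≤ ENNReal.ofReal (L ^ (2 * s) * π ^ (2 * k) * ∑' j : ℕ, b ^ j) := by
    rw [← _root_.tsum_mul_left, ENNReal.ofReal_tsum_of_nonneg (fun j => by positivity) (hsb.mul_left _)]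
    exact ENNReal.tsum_le_tsum fun j => ENNReal.ofReal_le_ofReal (high j)
  refine (add_le_add b1 b2).trans (le_of_eq ?_)
  have ta : 0 ≤ ∑' j : ℕ, a ^ j := tsum_nonneg fun j => by positivity
  have tb : 0 ≤ ∑' j : ℕ, b ^ j := tsum_nonneg fun j => by positivity
  rw [← ENNReal.ofReal_add (by positivity) (by positivity)]
  change _ = ENNReal.ofReal _ * _
  rw [← ENNReal.ofReal_mul (by positivity)]
  congr 1
  ring

/-- The dyadic sum defining an equivalent weight. -/
noncomputable def moserQ (s : ℝ) (k : ℕ) (l : ℤ) : ℝ≥0∞ :=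
  ∑' n : ℕ, ENNReal.ofReal (((2 : ℝ) ^ n) ^ (2 * s) * moserM n l ^ (2 * k))

theorem moser_weight (T : ℝ) (hT : 0 < T) (s : ℝ) (hs : 0 < s) (k : ℕ) (hk1 : 1 ≤ k) (hk : s < k) :
    ∃ C1 C2 : ℝ≥0, ∀ l : ℤ,
      ENNReal.ofReal ((1 + (2*π*l/T)^2) ^ s) ≤ C1 * (1 + moserQ s k l) ∧
      1 + moserQ s k l ≤ C2 * ENNReal.ofReal ((1 + (2*π*l/T)^2) ^ s) := by
  obtain ⟨C, hC⟩ := moser_upper s hs k hk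
  obtain ⟨κ, hκ⟩ : ∃ κ : ℝ, κ = 2 * π / T := ⟨_, rfl⟩
  have hκ0 : 0 < κ := by rw [hκ]; have := Real.pi_pos; positivity
  have hw : ∀ l : ℤ, 2*π*l/T = κ * l := fun l => by rw [hκ]; ring
  refine ⟨Real.toNNReal ((1 + κ ^ 2) ^ s), 1 + C * Real.toNNReal (κ ^ (-(2 * s))), fun l => ?_⟩
  rw [hw]
  have hw1 : 1 ≤ (1 + (κ * l) ^ 2) ^ s :=
    Real.one_le_rpow (by nlinarith [sq_nonneg (κ * l)]) hs.le
  rcases eq_or_ne l 0 with rfl | hl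
  · have hq : moserQ s k 0 = 0 := by
      unfold moserQ
      simp [moserM_zero, show k ≠ 0 by omega]
    rw [hq]
    simp only [Int.cast_zero, mul_zero, ne_eq, OfNat.ofNat_ne_zero, not_false_eq_true, zero_pow,
      add_zero, Real.one_rpow, ENNReal.ofReal_one, mul_one]
    refine ⟨?_, ?_⟩
    · change (1 : ℝ≥0∞) ≤ ENNReal.ofReal _
      rw [← ENNReal.ofReal_one]
      exact ENNReal.ofReal_le_ofReal (Real.one_le_rpow (by nlinarith [sq_nonneg κ]) hs.le)
    · push_cast
      exact le_self_add
  · have hL : 1 ≤ |(l : ℝ)| := by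
      have := Int.one_le_abs hl
      exact_mod_cast this
    have hLs : |(l : ℝ)| ^ (2 * s) = ((l : ℝ) ^ 2) ^ s := by
      rw [Real.rpow_mul (by positivity)]
      norm_num
    constructor
    · obtain ⟨n, hn1, hn2⟩ := moserM_lower l hl
      have h1 : ENNReal.ofReal (|(l : ℝ)| ^ (2 * s)) ≤ moserQ s k l := by
        refine le_trans ?_ (ENNReal.le_tsum n)
        apply ENNReal.ofReal_le_ofReal
        calc |(l : ℝ)| ^ (2 * s) ≤ ((2 : ℝ) ^ n) ^ (2 * s) * 1 := by
              rw [mul_one]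
              exact Real.rpow_le_rpow (by positivity) hn2 (by linarith)
          _ ≤ _ := by
              gcongr
              exact one_le_pow₀ hn1
      have h2 : (1 + (κ * l) ^ 2) ^ s ≤ (1 + κ ^ 2) ^ s * |(l : ℝ)| ^ (2 * s) := by
        rw [hLs, ← Real.mul_rpow (by positivity) (by positivity)]
        refine Real.rpow_le_rpow (by positivity) ?_ hs.le
        have : 1 ≤ (l : ℝ) ^ 2 := by rw [← sq_abs]; nlinarith
        nlinarith [sq_nonneg κ]
      calc _ ≤ ENNReal.ofReal ((1 + κ ^ 2) ^ s * |(l : ℝ)| ^ (2 * s)) :=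
            ENNReal.ofReal_le_ofReal h2
        _ = ENNReal.ofReal ((1 + κ ^ 2) ^ s) * ENNReal.ofReal (|(l : ℝ)| ^ (2 * s)) :=
            ENNReal.ofReal_mul (by positivity)
        _ ≤ ENNReal.ofReal ((1 + κ ^ 2) ^ s) * (1 + moserQ s k l) := by
            gcongr
            exact h1.trans le_add_self
    · have h1 : moserQ s k l ≤ _ := hC l hl
      have h2 : |(l : ℝ)| ^ (2 * s) ≤ κ ^ (-(2 * s)) * (1 + (κ * l) ^ 2) ^ s := by
        have e : |(l : ℝ)| ^ (2 * s) = κ ^ (-(2 * s)) * ((κ * l) ^ 2) ^ s := by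
          rw [hLs, mul_pow, Real.mul_rpow (by positivity) (by positivity), ← mul_assoc,
            ← Real.rpow_natCast κ 2, ← Real.rpow_mul hκ0.le, ← Real.rpow_add hκ0]
          norm_num
        rw [e]
        gcongr
        linarith
      push_cast
      rw [add_mul, one_mul]
      refine add_le_add ?_ ?_
      · rw [← ENNReal.ofReal_one]
        exact ENNReal.ofReal_le_ofReal hw1
      · refine h1.trans ?_
        rw [mul_assoc]
        gcongr
        refine (ENNReal.ofReal_le_ofReal h2).trans (le_of_eq ?_)
        rw [ENNReal.ofReal_mul (by positivity)]
        rfl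

/-! ### Fourier side -/

section fourierSide

variable {T : ℝ} [hT : Fact (0 < T)]

theorem moser_parseval {f : AddCircle T → ℂ} (hf : Continuous f) :
    eLpNorm f 2 (AddCircle.haarAddCircle (T := T)) ^ 2 = ∑' l : ℤ, ‖fourierCoeff f l‖ₑ ^ 2 := by
  let F : C(AddCircle T, ℂ) := ⟨f, hf⟩
  have h1 := hasSum_sq_fourierCoeff (ContinuousMap.toLp 2 AddCircle.haarAddCircle ℂ F)
  simp only [fourierCoeff_toLp] at h1
  have h2 : ∫ t, ‖(ContinuousMap.toLp 2 AddCircle.haarAddCircle ℂ F) t‖ ^ 2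
      ∂AddCircle.haarAddCircle = ∫ t, ‖f t‖ ^ 2 ∂(AddCircle.haarAddCircle (T := T)) := by
    refine integral_congr_ae ?_
    filter_upwards [ContinuousMap.coeFn_toLp (p := 2) (𝕜 := ℂ) AddCircle.haarAddCircle F] with t ht
    rw [ht]
    rfl
  rw [h2] at h1
  change HasSum (fun i => ‖fourierCoeff f i‖ ^ 2) _ at h1
  have h3 : ∀ l : ℤ, ‖fourierCoeff f l‖ₑ ^ 2 = ENNReal.ofReal (‖fourierCoeff f l‖ ^ 2) := by
    intro l
    rw [ENNReal.ofReal_pow (norm_nonneg _), ofReal_norm]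
  simp_rw [h3]
  rw [← ENNReal.ofReal_tsum_of_nonneg (fun l => by positivity) h1.summable]
  have h4 : ∑' l : ℤ, ‖fourierCoeff f l‖ ^ 2 = ∫ t, ‖f t‖ ^ 2 ∂(AddCircle.haarAddCircle (T := T)) :=
    h1.tsum_eq
  rw [h4]
  have hmem : MemLp f 2 (AddCircle.haarAddCircle (T := T)) := ⟨hf.aestronglyMeasurable,
    (moser_lp_fin _ hf _).lt_top⟩
  rw [hmem.eLpNorm_eq_integral_rpow_norm (by norm_num) (by norm_num),
    ← ENNReal.ofReal_pow (by positivity)]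
  congr 1
  simp only [ENNReal.toReal_ofNat, Real.rpow_ofNat]
  rw [← Real.rpow_natCast, ← Real.rpow_mul (by positivity)]
  norm_num

theorem moser_coeff_shift (f : AddCircle T → ℂ) (h : AddCircle T) (l : ℤ) :
    fourierCoeff (fun x => f (x + h)) l = fourier l h * fourierCoeff f l := by
  unfold fourierCoeff
  have h1 := integral_add_right_eq_self (μ := AddCircle.haarAddCircle (T := T))
    (fun t => fourier (-l) (t - h) • f t) h
  simp only [add_sub_cancel_right] at h1
  rw [h1, ← integral_const_mul]
  congr 1
  ext t
  have : (fourier (-l) (t - h) : ℂ) = fourier l h * fourier (-l) t := by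
    simp only [fourier_apply, ← Circle.coe_mul, ← AddCircle.toCircle_add]
    congr 2
    simp only [smul_sub, neg_smul, sub_neg_eq_add]
    abel
  rw [this, smul_eq_mul, smul_eq_mul, mul_assoc]

theorem moser_coeff_D {f : AddCircle T → ℂ} (hf : Continuous f) (h : AddCircle T) (l : ℤ) :
    fourierCoeff (moserD (fun x => x + h) f) l = (fourier l h - 1) * fourierCoeff f l := by
  have h1 : fourierCoeff (moserD (fun x => x + h) f) l
      = fourierCoeff (fun x => f (x + h)) l - fourierCoeff f l := by
    unfold fourierCoeff moserD
    rw [← integral_sub]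
    · simp only [smul_sub]
    · exact moser_cont_int _ (by fun_prop)
    · exact moser_cont_int _ (by fun_prop)
  rw [h1, moser_coeff_shift]
  ring

theorem moser_coeff_D_iter {f : AddCircle T → ℂ} (hf : Continuous f) (h : AddCircle T) (l : ℤ)
    (k : ℕ) : fourierCoeff ((moserD (fun x => x + h))^[k] f) l
      = (fourier l h - 1) ^ k * fourierCoeff f l := by
  induction k with
  | zero => simp
  | succ k ih =>
    rw [Function.iterate_succ_apply', moser_coeff_D (moserD_iter_cont (by fun_prop) hf k), ih]
    ring

theorem moser_fourier_M (n : ℕ) (l : ℤ) :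
    ‖(fourier l ((T / 2 ^ (n + 1) : ℝ) : AddCircle T) : ℂ) - 1‖ = moserM n l := by
  unfold moserM
  rw [fourier_coe_apply]
  congr 3
  have : (T : ℂ) ≠ 0 := by exact_mod_cast hT.out.ne'
  push_cast
  field_simp
  ring

theorem moser_diff_fourier {f : AddCircle T → ℂ} (hf : Continuous f) (k n : ℕ) :
    eLpNorm ((moserD (fun x => x + ((T / 2 ^ (n + 1) : ℝ) : AddCircle T)))^[k] f) 2
      (AddCircle.haarAddCircle (T := T)) ^ 2
    = ∑' l : ℤ, ENNReal.ofReal (moserM n l ^ (2 * k)) * ‖fourierCoeff f l‖ₑ ^ 2 := by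
  rw [moser_parseval (moserD_iter_cont (by fun_prop) hf k)]
  congr 1
  ext l
  have hm : 0 ≤ moserM n l := norm_nonneg _
  rw [moser_coeff_D_iter hf, enorm_mul, mul_pow, enorm_pow, ← ofReal_norm, moser_fourier_M,
    ← ENNReal.ofReal_pow hm, ← ENNReal.ofReal_pow (pow_nonneg hm _),
    ← pow_mul, mul_comm k 2]

theorem moser_Q_sum {f : AddCircle T → ℂ} (hf : Continuous f) (s : ℝ) (k : ℕ) :
    ∑' l : ℤ, (1 + moserQ s k l) * ‖fourierCoeff f l‖ₑ ^ 2
      = eLpNorm f 2 (AddCircle.haarAddCircle (T := T)) ^ 2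
        + ∑' n : ℕ, ENNReal.ofReal (((2 : ℝ) ^ n) ^ (2 * s)) *
          eLpNorm ((moserD (fun x => x + ((T / 2 ^ (n + 1) : ℝ) : AddCircle T)))^[k] f) 2
            (AddCircle.haarAddCircle (T := T)) ^ 2 := by
  simp_rw [add_mul, one_mul]
  rw [ENNReal.tsum_add, moser_parseval hf]
  congr 1
  simp_rw [moser_diff_fourier hf, ← ENNReal.tsum_mul_left]
  rw [ENNReal.tsum_comm]
  congr 1
  ext l
  unfold moserQ
  rw [← ENNReal.tsum_mul_right]
  congr 1
  ext n
  rw [ENNReal.ofReal_mul (by positivity), mul_assoc]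

/-- Moser estimate in `ℝ≥0∞` form for functions vanishing at the origin. -/
theorem moser_main (s : ℝ) (hs : 0 < s) (G : ℂ → ℂ) (hG : ContDiff ℝ (⊤ : ℕ∞) G)
    (hG0 : G 0 = 0) (R : ℝ≥0) : ∃ C : ℝ≥0, ∀ u : AddCircle T → ℂ, Continuous u →
      (∀ x, ‖u x‖ ≤ R) →
      ∑' l : ℤ, ENNReal.ofReal (sobolevSummand T s (fun x => G (u x)) l)
        ≤ C * ∑' l : ℤ, ENNReal.ofReal (sobolevSummand T s u l) := by
  obtain ⟨k, hk⟩ := exists_nat_gt s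
  have hk1 : 1 ≤ k := by
    have : (0 : ℝ) < k := by linarith
    exact_mod_cast this
  obtain ⟨C1, C2, hw⟩ := moser_weight T hT.out s hs k hk1 hk
  obtain ⟨K, hK⟩ := moser_diff (AddCircle.haarAddCircle (T := T)) k hk1 G hG R
  obtain ⟨H, hH, hGH⟩ := moser_hadamard G hG
  obtain ⟨M, hM⟩ := (isCompact_closedBall (0 : ℂ) R).exists_bound_of_continuousOn
    (f := fun z => H (0, z)) (hH.continuous.comp (by fun_prop)).continuousOn
  let L := K + M.toNNReal
  have hS : ∀ f : AddCircle T → ℂ, ∀ l : ℤ, ENNReal.ofReal (sobolevSummand T s f l)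
      = ENNReal.ofReal ((1 + (2*π*l/T)^2) ^ s) * ‖fourierCoeff f l‖ₑ ^ 2 := by
    intro f l
    unfold sobolevSummand
    rw [ENNReal.ofReal_mul (by positivity), ENNReal.ofReal_pow (norm_nonneg _), ofReal_norm]
  refine ⟨C1 * (L ^ 2 * C2), fun u hu hR => ?_⟩
  have hGu : Continuous fun x => G (u x) := hG.continuous.comp hu
  have hQ : ∑' l : ℤ, (1 + moserQ s k l) * ‖fourierCoeff (fun x => G (u x)) l‖ₑ ^ 2
      ≤ (L : ℝ≥0∞) ^ 2 * ∑' l : ℤ, (1 + moserQ s k l) * ‖fourierCoeff u l‖ₑ ^ 2 := by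
    rw [moser_Q_sum hGu, moser_Q_sum hu, mul_add, ← ENNReal.tsum_mul_left]
    refine add_le_add ?_ (ENNReal.tsum_le_tsum fun n => ?_)
    · rw [← mul_pow]
      refine pow_le_pow_left₀ (zero_le) ?_ 2
      have h1 : eLpNorm (fun x => G (u x)) 2 (AddCircle.haarAddCircle (T := T))
          ≤ M.toNNReal • eLpNorm u 2 (AddCircle.haarAddCircle (T := T)) := by
        refine eLpNorm_le_nnreal_smul_eLpNorm_of_ae_le_mul
          (Filter.Eventually.of_forall fun x => ?_) 2
        have h2 := hGH 0 (u x)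
        rw [hG0, sub_zero, sub_zero] at h2
        rw [h2]
        refine ((H (0, u x)).le_opNNNorm (u x)).trans ?_
        gcongr
        have h3 : ‖H (0, u x)‖ ≤ M := hM (u x) (by simpa using hR x)
        rw [← NNReal.coe_le_coe]
        exact h3.trans (Real.le_coe_toNNReal M)
      refine h1.trans ?_
      rw [ENNReal.smul_def, smul_eq_mul]
      gcongr
      exact le_add_self
    · have h1 := hK (fun x => x + ((T / 2 ^ (n + 1) : ℝ) : AddCircle T)) (by fun_prop)
        (measurePreserving_add_right _ _) u hu hR
      calc _ ≤ ENNReal.ofReal (((2 : ℝ) ^ n) ^ (2 * s)) * ((L : ℝ≥0∞) *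
            eLpNorm ((moserD (fun x => x + ((T / 2 ^ (n + 1) : ℝ) : AddCircle T)))^[k] u) 2
            (AddCircle.haarAddCircle (T := T))) ^ 2 := by
            gcongr
            refine h1.trans ?_
            gcongr
            exact le_self_add
        _ = _ := by rw [mul_pow]; ring
  simp_rw [hS]
  calc ∑' l : ℤ, ENNReal.ofReal ((1 + (2*π*l/T)^2) ^ s) *
          ‖fourierCoeff (fun x => G (u x)) l‖ₑ ^ 2
      ≤ ∑' l : ℤ, (C1 : ℝ≥0∞) * ((1 + moserQ s k l) *
            ‖fourierCoeff (fun x => G (u x)) l‖ₑ ^ 2) := by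
        refine ENNReal.tsum_le_tsum fun l => ?_
        rw [← mul_assoc]
        gcongr
        exact (hw l).1
    _ = (C1 : ℝ≥0∞) * ∑' l : ℤ, (1 + moserQ s k l) * ‖fourierCoeff (fun x => G (u x)) l‖ₑ ^ 2 :=
        ENNReal.tsum_mul_left
    _ ≤ (C1 : ℝ≥0∞) * ((L : ℝ≥0∞) ^ 2 * ∑' l : ℤ, (1 + moserQ s k l) * ‖fourierCoeff u l‖ₑ ^ 2) := by
        gcongr
    _ ≤ (C1 : ℝ≥0∞) * ((L : ℝ≥0∞) ^ 2 * ∑' l : ℤ, (C2 : ℝ≥0∞) *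
          (ENNReal.ofReal ((1 + (2*π*l/T)^2) ^ s) * ‖fourierCoeff u l‖ₑ ^ 2)) := by
        refine mul_le_mul_right (mul_le_mul_right (ENNReal.tsum_le_tsum fun l => ?_) _) _
        rw [← mul_assoc]
        gcongr
        exact (hw l).2
    _ = _ := by
        rw [ENNReal.tsum_mul_left]
        push_cast
        ring

end fourierSide

theorem stmt13 (T : ℝ) [hT : Fact (0 < T)] (s : ℝ) (hs : 1/2 < s)
    (g : ℂ → ℂ) (hg : ContDiff ℝ (⊤ : ℕ∞) g) :
    ∃ χ : ℝ → ℝ, Monotone χ ∧ (∀ r, 0 ≤ χ r) ∧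
      ∀ u : AddCircle T → ℂ, Continuous u → Summable (sobolevSummand T s u) →
        Summable (sobolevSummand T s (fun x => g (u x))) ∧
        Real.sqrt (∑' l : ℤ, sobolevSummand T s (fun x => g (u x)) l)
          ≤ Real.sqrt (∑' l : ℤ, sobolevSummand T s (fun _ => g 0) l)
            + χ (⨆ x : AddCircle T, ‖u x‖)
              * Real.sqrt (∑' l : ℤ, sobolevSummand T s u l) := by
  have hG : ContDiff ℝ (⊤ : ℕ∞) (fun z => g z - g 0) := hg.sub contDiff_const
  choose C hC using fun n : ℕ => moser_main (T := T) s (by linarith) (fun z => g z - g 0) hG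
    (by simp) (n : ℝ≥0)
  refine ⟨fun r => ∑ n ∈ Finset.range (⌈r⌉₊ + 1), Real.sqrt (C n), ?_, ?_, ?_⟩
  · intro a b hab
    refine Finset.sum_le_sum_of_subset_of_nonneg ?_ fun i _ _ => Real.sqrt_nonneg _
    exact Finset.range_mono (by have := Nat.ceil_mono hab; omega)
  · exact fun r => Finset.sum_nonneg fun i _ => Real.sqrt_nonneg _
  · intro u hu hsum
    have hnn : ∀ f : AddCircle T → ℂ, ∀ l, 0 ≤ sobolevSummand T s f l := by
      intro f l
      unfold sobolevSummand
      positivity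
    set r := ⨆ x : AddCircle T, ‖u x‖ with hr
    have hbdd : BddAbove (Set.range fun x => ‖u x‖) :=
      (isCompact_range hu.norm).bddAbove
    have hR : ∀ x, ‖u x‖ ≤ ((⌈r⌉₊ : ℝ≥0) : ℝ) := fun x =>
      (le_ciSup hbdd x).trans (by simpa using Nat.le_ceil r)
    have key := hC ⌈r⌉₊ u hu hR
    set v : AddCircle T → ℂ := fun x => g (u x) - g 0 with hv
    rw [← ENNReal.ofReal_tsum_of_nonneg (hnn u) hsum] at key
    have hfin : ∑' l : ℤ, ENNReal.ofReal (sobolevSummand T s v l) ≠ ⊤ :=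
      (key.trans_lt (ENNReal.mul_lt_top ENNReal.coe_lt_top ENNReal.ofReal_lt_top)).ne
    have hvs : Summable (sobolevSummand T s v) := by
      have := ENNReal.summable_toReal hfin
      simpa only [ENNReal.toReal_ofReal (hnn v _)] using this
    have hle : ∑' l, sobolevSummand T s v l ≤ C ⌈r⌉₊ * ∑' l, sobolevSummand T s u l := by
      rw [← ENNReal.ofReal_tsum_of_nonneg (hnn v) hvs, ← ENNReal.ofReal_coe_nnreal,
        ← ENNReal.ofReal_mul (by positivity)] at key
      exact (ENNReal.ofReal_le_ofReal_iff (mul_nonneg (by positivity) (tsum_nonneg (hnn u)))).1 key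
    -- the constant function
    have hcs : Summable (sobolevSummand T s (fun _ => g 0)) := by
      refine summable_of_ne_finset_zero (s := {0}) fun l hl => ?_
      have hl : l ≠ 0 := by simpa using hl
      unfold sobolevSummand
      have : fourierCoeff (fun _ : AddCircle T => g 0) l = 0 := by
        unfold fourierCoeff
        simp only [smul_eq_mul]
        rw [integral_mul_const]
        have h0 : ∫ t : AddCircle T, (fourier (-l) t : ℂ) ∂AddCircle.haarAddCircle = 0 := by
          exact integral_eq_zero_of_add_right_eq_neg
            (μ := AddCircle.haarAddCircle) (fourier_add_half_inv_index (neg_ne_zero.2 hl) hT.out)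
        rw [h0, zero_mul]
      rw [this]
      simp
    have hadd : ∀ l, fourierCoeff (fun x => g (u x)) l
        = fourierCoeff (fun _ : AddCircle T => g 0) l + fourierCoeff v l := by
      intro l
      unfold fourierCoeff
      rw [← integral_add]
      · refine integral_congr_ae (Filter.Eventually.of_forall fun x => ?_)
        simp [hv, ← mul_add]
      · exact moser_cont_int _ (by fun_prop)
      · have : Continuous v := hG.continuous.comp hu
        exact moser_cont_int _ (by fun_prop)
    let w : ℤ → ℝ := fun l => (1 + (2*π*l/T)^2) ^ s
    have hw0 : ∀ l, 0 ≤ w l := fun l => by positivity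
    let φ : (AddCircle T → ℂ) → ℤ → ℝ := fun f l => Real.sqrt (w l) * ‖fourierCoeff f l‖
    have hφ : ∀ f l, φ f l ^ (2 : ℝ) = sobolevSummand T s f l := by
      intro f l
      simp only [φ]
      rw [Real.rpow_two, mul_pow, Real.sq_sqrt (hw0 l)]
      rfl
    have hφ0 : ∀ f l, 0 ≤ φ f l := fun f l => by positivity
    have hcs' : Summable fun l => φ (fun _ => g 0) l ^ (2 : ℝ) := by simpa only [hφ] using hcs
    have hvs' : Summable fun l => φ v l ^ (2 : ℝ) := by simpa only [hφ] using hvs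
    obtain ⟨m1, m2⟩ := Real.Lp_add_le_tsum_of_nonneg (p := 2) (by norm_num)
      (hφ0 (fun _ => g 0)) (hφ0 v) hcs' hvs'
    have hpt : ∀ l, sobolevSummand T s (fun x => g (u x)) l
        ≤ (φ (fun _ => g 0) l + φ v l) ^ (2 : ℝ) := by
      intro l
      rw [← hφ]
      refine Real.rpow_le_rpow (hφ0 _ _) ?_ (by norm_num)
      simp only [φ]
      rw [← mul_add, hadd l]
      gcongr
      exact norm_add_le _ _
    have hgs : Summable (sobolevSummand T s (fun x => g (u x))) :=
      Summable.of_nonneg_of_le (hnn _) hpt m1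
    refine ⟨hgs, ?_⟩
    simp only [hφ] at m2
    rw [← Real.sqrt_eq_rpow, ← Real.sqrt_eq_rpow, ← Real.sqrt_eq_rpow] at m2
    refine (Real.sqrt_le_sqrt (hgs.tsum_le_tsum hpt m1)).trans (m2.trans ?_)
    gcongr
    refine (Real.sqrt_le_sqrt hle).trans ?_
    rw [Real.sqrt_mul (by positivity)]
    gcongr
    exact Finset.single_le_sum (f := fun n => Real.sqrt (C n)) (fun i _ => Real.sqrt_nonneg _)
      (Finset.mem_range.2 (Nat.lt_succ_self _))
end
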